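/- Let U, E ∈ C₆ be unitary elements. Then there exists a Jordan *-automorphism T of C₆ such that: (i) T(E) is a diagonal matrix; and (ii) every entry of T(U) lies in ℍ_ℂ × {0} ⊆ 𝕆 (i.e. the entries of T(U) are biquaternions). -/

import Mathlib

/-!
Two facts about the automorphisms of `C₆` carry the proof.

* Spectral theorem (`exists_aut_diag`): every unitary becomes diagonal under some automorphism.
* Simultaneous reduction (`exists_fixAut_biquat`): if `P` is a minimal projection and `Q` is a real
  element with `P ∘ Q = 0`, some automorphism that fixes all diagonal matrices moves both `P` and
  `Q` into `H₃(ℍ_ℂ)`.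

Given `U` and `E`, the spectral theorem makes `E` diagonal. Applied to the image of `U`, it writes
that image as a combination of three minimal projections, pairwise orthogonal and with sum `𝟏`. The
simultaneous reduction moves two of them into `H₃(ℍ_ℂ)` while `E` stays unchanged; the third one,
being the complement of the first two, follows, and so does `U`.

Automorphisms come from two sources. Write an element of `H₃(𝕆)` as a pair of a matrix `M` in
`H₃(ℍ_ℂ)` and a vector `a` in `ℍ_ℂ³`, the latter encoding the skew-symmetric matrix of second
components. In this model the Jordan product has the formula `jord_enc`, which shows that `V` in
`Sp(3)` acts by `(M, a) ↦ (V M Vᴴ, V a)` (`TV_aut`). Moreover, every automorphism of the real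
octonions acts entrywise (`IsOctAut.map_aut`), and such automorphisms carry any given real octonion
into `ℝ + ℝ i` (`exists_octAut`).

For the spectral theorem, diagonal elements of `Sp(3)` and octonion automorphisms make a real
element complex Hermitian without touching diagonal matrices (`exists_fixAut_emb`). The real part of
the unitary is therefore diagonalised by a complex unitary matrix. Then the imaginary part is made
complex; unitarity forces the Jordan multiplications by the two parts to commute, which forces the
two complex matrices to commute, so they are diagonalised together.

For the simultaneous reduction, `P` is first made complex and then, since it has rank one, real
symmetric (`exists_fixAut_real`). Octonion automorphisms now fix `P`. Orthogonality to `P` says that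
the vector `a` of second components of `Q` satisfies `a = P a` (`vc_of_orth`), so it is determined
by a single coordinate, and an octonion automorphism makes that coordinate zero.
-/

noncomputable section

open Matrix

/-- The biquaternions `ℍ_ℂ`. -/
abbrev HC : Type := Quaternion ℂ

/-- The `ℂ`-linear quaternion conjugation `x ↦ x⋄` on `ℍ_ℂ`. -/
def qdia (x : HC) : HC := ⟨x.re, -x.imI, -x.imJ, -x.imK⟩

/-- Coefficientwise complex conjugation `x ↦ x̄` on `ℍ_ℂ`. -/
def qbar (x : HC) : HC :=
  ⟨starRingEnd ℂ x.re, starRingEnd ℂ x.imI, starRingEnd ℂ x.imJ, starRingEnd ℂ x.imK⟩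

/-- The complex octonions `𝕆`, modelled as pairs of biquaternions. -/
abbrev Oct : Type := HC × HC

/-- Cayley–Dickson multiplication on `𝕆`. -/
def omul (x y : Oct) : Oct :=
  (x.1 * y.1 - y.2 * qdia x.2, qdia x.1 * y.2 + y.1 * x.2)

/-- The octonion unit `1 = (1, 0)`. -/
def oone : Oct := (1, 0)

/-- The linear involution `x ↦ x⋄` on `𝕆`. -/
def odia (x : Oct) : Oct := (qdia x.1, -x.2)

/-- The conjugation `x ↦ x̄` on `𝕆`. -/
def obar (x : Oct) : Oct := (qbar x.1, qbar x.2)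

/-- The conjugate-linear involution `x* = (x⋄)‾` on `𝕆`. -/
def ostar (x : Oct) : Oct := obar (odia x)

/-- `3×3` matrices of complex octonions. -/
abbrev M3O : Type := Matrix (Fin 3) (Fin 3) Oct

/-- Matrix product formed using the octonion multiplication `⬝` on entries. -/
def mmulO (X Y : M3O) : M3O := Matrix.of fun i j => ∑ k : Fin 3, omul (X i k) (Y k j)

/-- The Jordan product `X∘Y = ½(X⬝Y + Y⬝X)` on `M₃(𝕆)`. -/
def jord (X Y : M3O) : M3O := (2⁻¹ : ℂ) • (mmulO X Y + mmulO Y X)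

/-- The transpose with `⋄` applied entrywise, `Xᵈ`. -/
def mdia (X : M3O) : M3O := Matrix.of fun i j => odia (X j i)

/-- The involution `X*`: the conjugation `x ↦ x̄` applied entrywise. -/
def mstar (X : M3O) : M3O := Matrix.of fun i j => obar (X i j)

/-- The Cartan factor of type 6: `C₆ = H₃(𝕆) = {X ∈ M₃(𝕆) : Xᵈ = X}`. -/
def H3O : Set M3O := {X | mdia X = X}

/-- The triple product `{X,Y,Z} = (X∘Y*)∘Z + (Z∘Y*)∘X − (X∘Z)∘Y*` on `C₆`. -/
def trip (X Y Z : M3O) : M3O :=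
  jord (jord X (mstar Y)) Z + jord (jord Z (mstar Y)) X - jord (jord X Z) (mstar Y)

/-- The identity matrix `𝟏` of `M₃(𝕆)`. -/
def oneM : M3O := Matrix.of fun i j => if i = j then oone else 0

/-- A Jordan `*`-automorphism of `C₆`: a (ℂ-)linear bijection of `C₆ = H₃(𝕆)` onto itself
preserving the Jordan product `∘` and the involution `*`. -/
def IsJordanStarAut (T : M3O → M3O) : Prop :=
  Set.BijOn T H3O H3O ∧
  (∀ X ∈ H3O, ∀ Y ∈ H3O, T (X + Y) = T X + T Y) ∧
  (∀ (c : ℂ), ∀ X ∈ H3O, T (c • X) = c • T X) ∧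
  (∀ X ∈ H3O, ∀ Y ∈ H3O, T (jord X Y) = jord (T X) (T Y)) ∧
  (∀ X ∈ H3O, T (mstar X) = mstar (T X))

/-- A projection in `C₆`: `P ∈ H₃(𝕆)` with `P* = P` and `P∘P = P`. -/
def IsProjO (P : M3O) : Prop := P ∈ H3O ∧ mstar P = P ∧ jord P P = P

/-- A minimal projection in `C₆`: a nonzero projection `P` with `{P,X,P} ∈ ℂ·P`
for every `X ∈ C₆`. -/
def IsMinProjO (P : M3O) : Prop :=
  IsProjO P ∧ P ≠ 0 ∧ ∀ X ∈ H3O, ∃ c : ℂ, trip P X P = c • P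

/-- A unitary element of `C₆`: `U ∈ C₆` with `{U,U,X} = X` for every `X ∈ C₆`. -/
def IsUnitaryO (U : M3O) : Prop := U ∈ H3O ∧ ∀ X ∈ H3O, trip U U X = X

/-! ### Biquaternions and the model `H₃(ℍ_ℂ) ⊕ ℍ_ℂ³` of `H₃(𝕆)` -/

theorem qdia_eq_star (x : HC) : qdia x = star x := by
  ext <;> simp [qdia]

@[simp] theorem HC_one_re : (1 : HC).re = 1 := rfl
@[simp] theorem HC_one_imI : (1 : HC).imI = 0 := rfl
@[simp] theorem HC_one_imJ : (1 : HC).imJ = 0 := rfl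
@[simp] theorem HC_one_imK : (1 : HC).imK = 0 := rfl
@[simp] theorem HC_zero_re : (0 : HC).re = 0 := rfl
@[simp] theorem HC_zero_imI : (0 : HC).imI = 0 := rfl
@[simp] theorem HC_zero_imJ : (0 : HC).imJ = 0 := rfl
@[simp] theorem HC_zero_imK : (0 : HC).imK = 0 := rfl
theorem HC_smul_mul (c : ℂ) (x y : HC) : (c • x) * y = c • (x * y) := by
  ext <;> simp <;> ring
theorem HC_mul_smul (c : ℂ) (x y : HC) : x * (c • y) = c • (x * y) := by
  ext <;> simp <;> ring
theorem HC_star_smul (c : ℂ) (x : HC) : star (c • x) = c • star x := Quaternion.star_smul c x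
theorem HC_neg_mul (x y : HC) : -x * y = -(x * y) := neg_mul x y
theorem HC_mul_neg (x y : HC) : x * -y = -(x * y) := mul_neg x y
theorem HC_star_neg (x : HC) : star (-x) = -star x := star_neg x
theorem HC_coe (c : ℂ) : (c : HC) = c • (1 : HC) := by ext <;> simp

@[simp] theorem qbar_re (x : HC) : (qbar x).re = starRingEnd ℂ x.re := rfl
@[simp] theorem qbar_imI (x : HC) : (qbar x).imI = starRingEnd ℂ x.imI := rfl
@[simp] theorem qbar_imJ (x : HC) : (qbar x).imJ = starRingEnd ℂ x.imJ := rfl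
@[simp] theorem qbar_imK (x : HC) : (qbar x).imK = starRingEnd ℂ x.imK := rfl

/-- Coefficientwise complex conjugation as a ring endomorphism of `ℍ_ℂ`. -/
def qbarHom : HC →+* HC where
  toFun := qbar
  map_one' := by ext <;> simp
  map_zero' := by ext <;> simp
  map_add' x y := by ext <;> simp
  map_mul' x y := by ext <;> simp

theorem qbar_star (x : HC) : qbar (star x) = star (qbar x) := by
  ext <;> simp

theorem qbar_smul (c : ℂ) (x : HC) : qbar (c • x) = starRingEnd ℂ c • qbar x := by
  ext <;> simp

theorem mem_H3O {X : M3O} : X ∈ H3O ↔ ∀ i j, odia (X j i) = X i j :=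
  ⟨fun h i j => congrFun (congrFun h i) j, fun h => by ext1 i j; exact h i j⟩

/-- The `ℍ_ℂ`-part of an octonion matrix. -/
def fs (X : M3O) : Matrix (Fin 3) (Fin 3) HC := of fun i j => (X i j).1

/-- The vector that encodes the (skew-symmetric) second components of an element of `H₃(𝕆)`. -/
def vc (X : M3O) : Fin 3 → HC := ![(X 1 2).2, (X 2 0).2, (X 0 1).2]

/-- The skew-symmetric matrix attached to a vector. -/
def sk (a : Fin 3 → HC) : Matrix (Fin 3) (Fin 3) HC :=
  !![0, a 2, -a 1; -a 2, 0, a 0; a 1, -a 0, 0]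

/-- The octonion matrix with `ℍ_ℂ`-part `M` and second components `sk a`. -/
def enc (M : Matrix (Fin 3) (Fin 3) HC) (a : Fin 3 → HC) : M3O :=
  of fun i j => (M i j, sk a i j)

/-- The scalar part of the trace. -/
def tau (M : Matrix (Fin 3) (Fin 3) HC) : ℂ := ∑ i, (M i i).re

theorem fs_enc (M : Matrix (Fin 3) (Fin 3) HC) (a : Fin 3 → HC) : fs (enc M a) = M := rfl

theorem vc_enc (M : Matrix (Fin 3) (Fin 3) HC) (a : Fin 3 → HC) : vc (enc M a) = a := by
  ext1 i
  fin_cases i <;> simp [vc, enc, sk]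

theorem neg_self_HC {x : HC} (h : -x = x) : x = 0 := by
  have e : ∀ z : ℂ, -z = z → z = 0 := fun z hz => by linear_combination (-1 / 2 : ℂ) * hz
  ext
  · exact e _ (congrArg (fun y : HC => y.re) h)
  · exact e _ (congrArg (fun y : HC => y.imI) h)
  · exact e _ (congrArg (fun y : HC => y.imJ) h)
  · exact e _ (congrArg (fun y : HC => y.imK) h)

theorem enc_fs_vc {X : M3O} (hX : X ∈ H3O) : enc (fs X) (vc X) = X := by
  rw [mem_H3O] at hX
  have hd : ∀ i, (X i i).2 = 0 := fun i => neg_self_HC (congrArg Prod.snd (hX i i))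
  have ho : ∀ i j, -(X j i).2 = (X i j).2 := fun i j => congrArg Prod.snd (hX i j)
  ext1 i j
  fin_cases i <;> fin_cases j <;> refine Prod.ext rfl ?_ <;> simp [enc, sk, vc, hd, ho]

theorem fs_herm {X : M3O} (hX : X ∈ H3O) : (fs X)ᴴ = fs X := by
  ext1 i j
  have := congrArg Prod.fst (mem_H3O.mp hX i j)
  simpa [odia, qdia_eq_star, fs] using this

theorem enc_mem {M : Matrix (Fin 3) (Fin 3) HC} {a : Fin 3 → HC} (hM : Mᴴ = M) :
    enc M a ∈ H3O := by
  rw [mem_H3O]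
  intro i j
  refine Prod.ext ?_ ?_
  · simpa [odia, qdia_eq_star, enc] using congrFun (congrFun hM i) j
  · fin_cases i <;> fin_cases j <;> simp [odia, enc, sk]

theorem herm_diag {M : Matrix (Fin 3) (Fin 3) HC} (hM : Mᴴ = M) (i : Fin 3) :
    M i i = ((M i i).re : HC) := by
  rw [← Quaternion.star_eq_self]
  exact congrFun (congrFun hM i) i

set_option maxHeartbeats 1000000 in
/-- The Jordan product in the model `H₃(ℍ_ℂ) ⊕ ℍ_ℂ³`. The formula only involves quaternion matrix
products, the trace and `a b⋄ᵀ`, which makes its invariance under `Sp(3)` visible. -/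
theorem jord_enc {M N : Matrix (Fin 3) (Fin 3) HC} {a b : Fin 3 → HC} (hM : Mᴴ = M)
    (hN : Nᴴ = N) :
    jord (enc M a) (enc N b) =
      enc ((2⁻¹ : ℂ) • (M * N + N * M - (vecMulVec a (star b) + vecMulVec b (star a)) +
          tau (vecMulVec a (star b) + vecMulVec b (star a)) • 1))
        ((2⁻¹ : ℂ) • (tau M • b - M *ᵥ b + (tau N • a - N *ᵥ a))) := by
  have hM' : ∀ i j, star (M i j) = M j i := fun i j => congrFun (congrFun hM j) i
  have hN' : ∀ i j, star (N i j) = N j i := fun i j => congrFun (congrFun hN j) i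
  have m : ∀ x, tau M • x = M 0 0 * x + M 1 1 * x + M 2 2 * x := fun x => by
    rw [herm_diag hM 0, herm_diag hM 1, herm_diag hM 2]
    ext <;> simp [tau, Fin.sum_univ_three] <;> ring
  have n : ∀ x, tau N • x = N 0 0 * x + N 1 1 * x + N 2 2 * x := fun x => by
    rw [herm_diag hN 0, herm_diag hN 1, herm_diag hN 2]
    ext <;> simp [tau, Fin.sum_univ_three] <;> ring
  have t : tau (vecMulVec a (star b) + vecMulVec b (star a)) • (1 : HC) =
      a 0 * star (b 0) + b 0 * star (a 0) + (a 1 * star (b 1) + b 1 * star (a 1)) +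
        (a 2 * star (b 2) + b 2 * star (a 2)) := by
    ext <;> simp [tau, Fin.sum_univ_three, vecMulVec_apply] <;> ring
  ext1 i j
  refine Prod.ext ?_ ?_
  · change (2⁻¹ : ℂ) • ((mmulO _ _ i j).1 + (mmulO _ _ i j).1) = (2⁻¹ : ℂ) • ((M * N) i j +
      (N * M) i j - (a i * star (b j) + b i * star (a j)) +
      tau (vecMulVec a (star b) + vecMulVec b (star a)) • (1 : Matrix (Fin 3) (Fin 3) HC) i j)
    congr 1
    fin_cases i <;> fin_cases j <;>
    simp [mmulO, omul, enc, sk, Fin.sum_univ_three, Matrix.mul_apply, qdia_eq_star, t,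
      HC_neg_mul, HC_mul_neg, HC_star_neg] <;> abel
  · have e : (tau M • b - M *ᵥ b + (tau N • a - N *ᵥ a)) = fun k =>
        M 0 0 * b k + M 1 1 * b k + M 2 2 * b k - ∑ l, M k l * b l +
        (N 0 0 * a k + N 1 1 * a k + N 2 2 * a k - ∑ l, N k l * a l) := by
      ext1 k
      simp [m, n, mulVec, dotProduct]
    rw [e]
    have hs : ∀ v : Fin 3 → HC, sk ((2⁻¹ : ℂ) • v) i j = (2⁻¹ : ℂ) • sk v i j := fun v => by
      fin_cases i <;> fin_cases j <;> simp [sk]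
    refine Eq.trans (b := (2⁻¹ : ℂ) • ((mmulO _ _ i j).2 + (mmulO _ _ i j).2)) rfl
      (Eq.trans ?_ (hs _).symm)
    congr 1
    fin_cases i <;> fin_cases j <;>
    simp [mmulO, omul, enc, sk, Fin.sum_univ_three, qdia_eq_star, hM', hN',
      HC_neg_mul, HC_mul_neg, HC_star_neg] <;> abel

/-! ### Elementary properties of the octonions and of the Jordan product -/

theorem odia_omul (x y : Oct) : odia (omul x y) = omul (odia y) (odia x) := by
  simp only [odia, omul, qdia_eq_star]
  refine Prod.ext ?_ ?_ <;> ext <;> simp <;> ring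

theorem odia_add (x y : Oct) : odia (x + y) = odia x + odia y := by
  simp only [odia, qdia_eq_star]
  refine Prod.ext ?_ ?_ <;> ext <;> simp <;> ring

theorem odia_smul (c : ℂ) (x : Oct) : odia (c • x) = c • odia x := by
  simp only [odia, qdia_eq_star]
  refine Prod.ext ?_ ?_ <;> ext <;> simp

theorem obar_odia (x : Oct) : obar (odia x) = odia (obar x) := by
  simp only [odia, obar, qdia_eq_star]
  refine Prod.ext ?_ ?_ <;> ext <;> simp

theorem obar_omul (x y : Oct) : obar (omul x y) = omul (obar x) (obar y) := by
  simp only [obar, omul, qdia_eq_star]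
  refine Prod.ext ?_ ?_ <;> ext <;> simp

theorem obar_add (x y : Oct) : obar (x + y) = obar x + obar y := by
  refine Prod.ext ?_ ?_ <;> ext <;> simp [obar]

theorem obar_smul (c : ℂ) (x : Oct) : obar (c • x) = starRingEnd ℂ c • obar x := by
  refine Prod.ext ?_ ?_ <;> ext <;> simp [obar]

theorem obar_obar (x : Oct) : obar (obar x) = x := by
  refine Prod.ext ?_ ?_ <;> ext <;> simp [obar]

theorem odia_zero : odia 0 = 0 := by
  simp only [odia, qdia_eq_star]
  refine Prod.ext ?_ ?_ <;> simp

theorem omul_add (x y z : Oct) : omul x (y + z) = omul x y + omul x z := by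
  simp only [omul, qdia_eq_star]
  refine Prod.ext ?_ ?_ <;> ext <;> simp <;> ring

theorem add_omul (x y z : Oct) : omul (x + y) z = omul x z + omul y z := by
  simp only [omul, qdia_eq_star]
  refine Prod.ext ?_ ?_ <;> ext <;> simp <;> ring

theorem omul_smul (c : ℂ) (x y : Oct) : omul x (c • y) = c • omul x y := by
  simp only [omul, qdia_eq_star]
  refine Prod.ext ?_ ?_ <;> ext <;> simp <;> ring

theorem smul_omul (c : ℂ) (x y : Oct) : omul (c • x) y = c • omul x y := by
  simp only [omul, qdia_eq_star]
  refine Prod.ext ?_ ?_ <;> ext <;> simp <;> ring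

theorem jord_apply (X Y : M3O) (i j : Fin 3) :
    jord X Y i j = (2⁻¹ : ℂ) • ((∑ k, omul (X i k) (Y k j)) + ∑ k, omul (Y i k) (X k j)) := rfl

theorem jord_comm (X Y : M3O) : jord X Y = jord Y X := by
  ext1 i j
  rw [jord_apply, jord_apply, add_comm]

theorem jord_add (X Y Z : M3O) : jord X (Y + Z) = jord X Y + jord X Z := by
  ext1 i j
  rw [Matrix.add_apply]
  simp only [jord_apply, Matrix.add_apply, omul_add, add_omul, Finset.sum_add_distrib]
  refine Eq.trans ?_ (smul_add (2⁻¹ : ℂ) (_ : Oct) (_ : Oct))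
  congr 1
  abel

theorem add_jord (X Y Z : M3O) : jord (X + Y) Z = jord X Z + jord Y Z := by
  rw [jord_comm, jord_add, jord_comm Z, jord_comm Z]

theorem jord_smul (c : ℂ) (X Y : M3O) : jord X (c • Y) = c • jord X Y := by
  ext1 i j
  refine Eq.trans ?_ (b := c • jord X Y i j) rfl
  have h : ∀ i j, (c • Y) i j = c • Y i j := fun i j => rfl
  simp only [jord_apply, h, omul_smul, smul_omul, ← Finset.smul_sum]
  rw [← smul_add, smul_comm]

theorem smul_jord (c : ℂ) (X Y : M3O) : jord (c • X) Y = c • jord X Y := by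
  rw [jord_comm, jord_smul, jord_comm]

theorem M3O_sub (X Y : M3O) : X - Y = X + (-1 : ℂ) • Y := by
  ext1 i j
  change X i j - Y i j = X i j + (-1 : ℂ) • Y i j
  module

theorem mstar_add (X Y : M3O) : mstar (X + Y) = mstar X + mstar Y := by
  ext1 i j
  exact obar_add _ _

theorem mstar_smul (c : ℂ) (X : M3O) : mstar (c • X) = starRingEnd ℂ c • mstar X := by
  ext1 i j
  exact obar_smul _ _

theorem mstar_mstar (X : M3O) : mstar (mstar X) = X := by
  ext1 i j
  exact obar_obar _

theorem H3O_add {X Y : M3O} (hX : X ∈ H3O) (hY : Y ∈ H3O) : X + Y ∈ H3O := by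
  rw [mem_H3O] at *
  intro i j
  rw [Matrix.add_apply, odia_add, hX, hY]
  rfl

theorem H3O_smul (c : ℂ) {X : M3O} (hX : X ∈ H3O) : c • X ∈ H3O := by
  rw [mem_H3O] at *
  intro i j
  change odia (c • X j i) = c • X i j
  rw [odia_smul, hX]

theorem H3O_sub {X Y : M3O} (hX : X ∈ H3O) (hY : Y ∈ H3O) : X - Y ∈ H3O := by
  rw [M3O_sub]
  exact H3O_add hX (H3O_smul _ hY)

theorem H3O_mstar {X : M3O} (hX : X ∈ H3O) : mstar X ∈ H3O := by
  rw [mem_H3O] at *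
  intro i j
  change odia (obar (X j i)) = obar (X i j)
  rw [← obar_odia, hX]

theorem H3O_jord {X Y : M3O} (hX : X ∈ H3O) (hY : Y ∈ H3O) : jord X Y ∈ H3O := by
  rw [mem_H3O] at *
  intro i j
  rw [jord_apply, jord_apply, odia_smul, odia_add, add_comm]
  simp only [Fin.sum_univ_three, odia_add, odia_omul, hX, hY]

theorem H3O_trip {X Y Z : M3O} (hX : X ∈ H3O) (hY : Y ∈ H3O) (hZ : Z ∈ H3O) :
    trip X Y Z ∈ H3O :=
  H3O_sub (H3O_add (H3O_jord (H3O_jord hX (H3O_mstar hY)) hZ)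
    (H3O_jord (H3O_jord hZ (H3O_mstar hY)) hX)) (H3O_jord (H3O_jord hX hZ) (H3O_mstar hY))

/-! ### The group of Jordan `*`-automorphisms -/

/-- A map of `H₃(𝕆)` with an inverse, preserving all operations, is an automorphism. -/
theorem aut_of_inverse {T S : M3O → M3O} (hT : ∀ X ∈ H3O, T X ∈ H3O) (hS : ∀ X ∈ H3O, S X ∈ H3O)
    (hST : ∀ X ∈ H3O, S (T X) = X) (hTS : ∀ X ∈ H3O, T (S X) = X)
    (hadd : ∀ X ∈ H3O, ∀ Y ∈ H3O, T (X + Y) = T X + T Y)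
    (hsmul : ∀ (c : ℂ), ∀ X ∈ H3O, T (c • X) = c • T X)
    (hjord : ∀ X ∈ H3O, ∀ Y ∈ H3O, T (jord X Y) = jord (T X) (T Y))
    (hstar : ∀ X ∈ H3O, T (mstar X) = mstar (T X)) : IsJordanStarAut T :=
  ⟨Set.InvOn.bijOn (f' := S) ⟨hST, hTS⟩ hT hS, hadd, hsmul, hjord, hstar⟩

namespace IsJordanStarAut

variable {T S : M3O → M3O}

theorem mem (hT : IsJordanStarAut T) {X : M3O} (hX : X ∈ H3O) : T X ∈ H3O := hT.1.mapsTo hX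

theorem inj (hT : IsJordanStarAut T) {X Y : M3O} (hX : X ∈ H3O) (hY : Y ∈ H3O)
    (h : T X = T Y) : X = Y := hT.1.injOn hX hY h

theorem add (hT : IsJordanStarAut T) {X Y : M3O} (hX : X ∈ H3O) (hY : Y ∈ H3O) :
    T (X + Y) = T X + T Y := hT.2.1 X hX Y hY

theorem smul (hT : IsJordanStarAut T) (c : ℂ) {X : M3O} (hX : X ∈ H3O) :
    T (c • X) = c • T X := hT.2.2.1 c X hX

theorem sub (hT : IsJordanStarAut T) {X Y : M3O} (hX : X ∈ H3O) (hY : Y ∈ H3O) :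
    T (X - Y) = T X - T Y := by
  rw [M3O_sub, M3O_sub, hT.add hX (H3O_smul _ hY), hT.smul _ hY]

theorem map_jord (hT : IsJordanStarAut T) {X Y : M3O} (hX : X ∈ H3O) (hY : Y ∈ H3O) :
    T (jord X Y) = jord (T X) (T Y) := hT.2.2.2.1 X hX Y hY

theorem map_mstar (hT : IsJordanStarAut T) {X : M3O} (hX : X ∈ H3O) :
    T (mstar X) = mstar (T X) := hT.2.2.2.2 X hX

theorem map_trip (hT : IsJordanStarAut T) {X Y Z : M3O} (hX : X ∈ H3O) (hY : Y ∈ H3O)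
    (hZ : Z ∈ H3O) : T (trip X Y Z) = trip (T X) (T Y) (T Z) := by
  have hY' := H3O_mstar hY
  have h1 := H3O_jord hX hY'
  have h2 := H3O_jord hZ hY'
  have h3 := H3O_jord hX hZ
  unfold trip
  rw [hT.sub (H3O_add (H3O_jord h1 hZ) (H3O_jord h2 hX)) (H3O_jord h3 hY'),
    hT.add (H3O_jord h1 hZ) (H3O_jord h2 hX), hT.map_jord h1 hZ, hT.map_jord h2 hX,
    hT.map_jord h3 hY', hT.map_jord hX hY', hT.map_jord hZ hY', hT.map_jord hX hZ,
    hT.map_mstar hY]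

theorem refl : IsJordanStarAut id :=
  aut_of_inverse (S := id) (fun _ h => h) (fun _ h => h) (fun _ _ => rfl) (fun _ _ => rfl)
    (fun _ _ _ _ => rfl) (fun _ _ _ => rfl) (fun _ _ _ _ => rfl) (fun _ _ => rfl)

theorem comp (hT : IsJordanStarAut T) (hS : IsJordanStarAut S) :
    IsJordanStarAut (fun X => T (S X)) := by
  refine ⟨hT.1.comp hS.1, fun X hX Y hY => ?_, fun c X hX => ?_, fun X hX Y hY => ?_,
    fun X hX => ?_⟩
  · simp only [hS.add hX hY, hT.add (hS.mem hX) (hS.mem hY)]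
  · simp only [hS.smul c hX, hT.smul c (hS.mem hX)]
  · simp only [hS.map_jord hX hY, hT.map_jord (hS.mem hX) (hS.mem hY)]
  · simp only [hS.map_mstar hX, hT.map_mstar (hS.mem hX)]

theorem exists_inverse (hT : IsJordanStarAut T) :
    ∃ S, IsJordanStarAut S ∧ (∀ X ∈ H3O, S (T X) = X) ∧ ∀ X ∈ H3O, T (S X) = X := by
  have hi := hT.1.invOn_invFunOn
  set S := Function.invFunOn T H3O
  have hm : ∀ X ∈ H3O, S X ∈ H3O := hT.1.surjOn.mapsTo_invFunOn
  have hTS : ∀ X ∈ H3O, T (S X) = X := fun X hX => hi.2 hX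
  refine ⟨S, aut_of_inverse (S := T) hm (fun X hX => hT.mem hX) hTS (fun X hX => hi.1 hX)
    ?_ ?_ ?_ ?_, fun X hX => hi.1 hX, hTS⟩
  · intro X hX Y hY
    refine hT.inj (hm _ (H3O_add hX hY)) (H3O_add (hm _ hX) (hm _ hY)) ?_
    rw [hT.add (hm _ hX) (hm _ hY), hTS _ hX, hTS _ hY, hTS _ (H3O_add hX hY)]
  · intro c X hX
    refine hT.inj (hm _ (H3O_smul c hX)) (H3O_smul c (hm _ hX)) ?_
    rw [hT.smul c (hm _ hX), hTS _ hX, hTS _ (H3O_smul c hX)]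
  · intro X hX Y hY
    refine hT.inj (hm _ (H3O_jord hX hY)) (H3O_jord (hm _ hX) (hm _ hY)) ?_
    rw [hT.map_jord (hm _ hX) (hm _ hY), hTS _ hX, hTS _ hY, hTS _ (H3O_jord hX hY)]
  · intro X hX
    refine hT.inj (hm _ (H3O_mstar hX)) (H3O_mstar (hm _ hX)) ?_
    rw [hT.map_mstar (hm _ hX), hTS _ hX, hTS _ (H3O_mstar hX)]

theorem map_unitary (hT : IsJordanStarAut T) {U : M3O} (hU : IsUnitaryO U) :
    IsUnitaryO (T U) := by
  refine ⟨hT.mem hU.1, fun X hX => ?_⟩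
  obtain ⟨Y, hY, rfl⟩ := hT.1.surjOn hX
  rw [← hT.map_trip hU.1 hU.1 hY, hU.2 Y hY]

theorem map_minProj (hT : IsJordanStarAut T) {P : M3O} (hP : IsMinProjO P) :
    IsMinProjO (T P) := by
  obtain ⟨⟨hm, hs, hi⟩, h0, hc⟩ := hP
  refine ⟨⟨hT.mem hm, ?_, ?_⟩, ?_, fun X hX => ?_⟩
  · rw [← hT.map_mstar hm, hs]
  · rw [← hT.map_jord hm hm, hi]
  · intro h
    have hz : (0 : ℂ) • P = 0 := by
      ext1 i j
      exact zero_smul ℂ (P i j)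
    have hz' : (0 : ℂ) • T P = 0 := by
      ext1 i j
      exact zero_smul ℂ (T P i j)
    refine h0 ((hT.inj (H3O_smul 0 hm) hm ?_).symm.trans hz)
    rw [hT.smul 0 hm, hz', h]
  · obtain ⟨Y, hY, rfl⟩ := hT.1.surjOn hX
    obtain ⟨c, h⟩ := hc Y hY
    exact ⟨c, by rw [← hT.map_trip hm hY hm, h, hT.smul c hm]⟩

end IsJordanStarAut

/-! ### Automorphisms from the compact symplectic group `Sp(3)` -/

theorem enc_add (M N : Matrix (Fin 3) (Fin 3) HC) (a b : Fin 3 → HC) :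
    enc (M + N) (a + b) = enc M a + enc N b := by
  ext1 i j
  refine Prod.ext rfl ?_
  fin_cases i <;> fin_cases j <;> simp [enc, sk] <;> abel

theorem enc_smul (c : ℂ) (M : Matrix (Fin 3) (Fin 3) HC) (a : Fin 3 → HC) :
    enc (c • M) (c • a) = c • enc M a := by
  ext1 i j
  refine Prod.ext rfl ?_
  change sk (c • a) i j = c • sk a i j
  fin_cases i <;> fin_cases j <;> simp [sk]

theorem mstar_enc (M : Matrix (Fin 3) (Fin 3) HC) (a : Fin 3 → HC) :
    mstar (enc M a) = enc (M.map qbarHom) (fun i => qbarHom (a i)) := by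
  ext1 i j
  refine Prod.ext rfl ?_
  change qbarHom (sk a i j) = sk (fun i => qbarHom (a i)) i j
  fin_cases i <;> fin_cases j <;> simp [sk]

theorem vc_add (X Y : M3O) : vc (X + Y) = vc X + vc Y := by
  ext1 i
  fin_cases i <;> rfl

theorem vc_smul (c : ℂ) (X : M3O) : vc (c • X) = c • vc X := by
  ext1 i
  fin_cases i <;> rfl

theorem mat_mul_smul (c : ℂ) (M N : Matrix (Fin 3) (Fin 3) HC) : M * (c • N) = c • (M * N) := by
  ext1 i j
  change (∑ k, M i k * (c • N k j)) = c • ∑ k, M i k * N k j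
  simp only [HC_mul_smul, Fin.sum_univ_three, smul_add]

theorem mat_smul_mul (c : ℂ) (M N : Matrix (Fin 3) (Fin 3) HC) : (c • M) * N = c • (M * N) := by
  ext1 i j
  change (∑ k, (c • M i k) * N k j) = c • ∑ k, M i k * N k j
  simp only [HC_smul_mul, Fin.sum_univ_three, smul_add]

theorem mat_mulVec_smul (c : ℂ) (M : Matrix (Fin 3) (Fin 3) HC) (a : Fin 3 → HC) :
    M *ᵥ (c • a) = c • (M *ᵥ a) := by
  ext1 i
  change (∑ k, M i k * (c • a k)) = c • ∑ k, M i k * a k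
  simp only [HC_mul_smul, Fin.sum_univ_three, smul_add]

theorem tau_mul_comm (M N : Matrix (Fin 3) (Fin 3) HC) : tau (M * N) = tau (N * M) := by
  simp only [tau, Matrix.mul_apply, Fin.sum_univ_three, Quaternion.re_add, Quaternion.re_mul]
  ring

/-- The action of a `3 × 3` quaternion matrix `V` on `H₃(𝕆)`: conjugation on the `ℍ_ℂ`-part and
left multiplication on the vector of second components. -/
def TV (V : Matrix (Fin 3) (Fin 3) HC) (X : M3O) : M3O :=
  enc (V * fs X * Vᴴ) (V *ᵥ vc X)

theorem TV_enc (V M : Matrix (Fin 3) (Fin 3) HC) (a : Fin 3 → HC) :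
    TV V (enc M a) = enc (V * M * Vᴴ) (V *ᵥ a) := by
  rw [TV, fs_enc, vc_enc]

/-- A real quaternionic unitary matrix, that is, an element of `Sp(3)`, acts on `H₃(𝕆)` by
automorphisms. -/
theorem TV_aut {V : Matrix (Fin 3) (Fin 3) HC} (h1 : V * Vᴴ = 1) (h2 : Vᴴ * V = 1)
    (hb : V.map qbarHom = V) : IsJordanStarAut (TV V) := by
  have hmem : ∀ W : Matrix (Fin 3) (Fin 3) HC, ∀ X ∈ H3O, TV W X ∈ H3O := fun W X hX => by
    refine enc_mem ?_
    rw [conjTranspose_mul, conjTranspose_mul, conjTranspose_conjTranspose, fs_herm hX,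
      Matrix.mul_assoc]
  have hinv : ∀ W W' : Matrix (Fin 3) (Fin 3) HC, W * W' = 1 → W'ᴴ * Wᴴ = 1 →
      ∀ X ∈ H3O, TV W (TV W' X) = X := fun W W' h h' X hX => by
    refine Eq.trans ?_ (enc_fs_vc hX)
    rw [TV, TV, fs_enc, vc_enc, mulVec_mulVec, h, one_mulVec,
      show W * (W' * fs X * W'ᴴ) * Wᴴ = (W * W') * fs X * (W'ᴴ * Wᴴ) by
        simp only [Matrix.mul_assoc], h, h', Matrix.one_mul, Matrix.mul_one]
  have hbH : Vᴴ.map qbarHom = Vᴴ := by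
    ext1 i j
    change qbar (star (V j i)) = star (V j i)
    rw [qbar_star]
    exact congrArg star (congrFun (congrFun hb j) i)
  refine aut_of_inverse (S := TV Vᴴ) (hmem V) (hmem Vᴴ)
    (hinv _ _ h2 (by rw [conjTranspose_conjTranspose]; exact h2))
    (hinv _ _ h1 (by rw [conjTranspose_conjTranspose]; exact h1)) ?_ ?_ ?_ ?_
  · intro X _ Y _
    rw [TV, TV, TV, ← enc_add, vc_add, mulVec_add, ← Matrix.add_mul, ← Matrix.mul_add]
    rfl
  · intro c X _
    rw [TV, TV, ← enc_smul, vc_smul, mat_mulVec_smul, ← mat_smul_mul, ← mat_mul_smul]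
    rfl
  · intro X hX Y hY
    have hv : ∀ a b : Fin 3 → HC, vecMulVec (V *ᵥ a) (star (V *ᵥ b)) =
        V * vecMulVec a (star b) * Vᴴ := fun a b => by
      rw [mul_vecMulVec, vecMulVec_mul, star_mulVec]
    have ht : ∀ M : Matrix (Fin 3) (Fin 3) HC, tau (V * M * Vᴴ) = tau M := fun M => by
      rw [tau_mul_comm, ← Matrix.mul_assoc, h2, Matrix.one_mul]
    have hM := fs_herm hX
    have hN := fs_herm hY
    have hM' := fs_herm (hmem V X hX)
    have hN' := fs_herm (hmem V Y hY)
    rw [TV, fs_enc] at hM' hN'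
    conv_lhs => rw [← enc_fs_vc hX, ← enc_fs_vc hY]
    rw [jord_enc hM hN, TV_enc, TV, TV, jord_enc hM' hN', ht, ht, hv, hv]
    generalize fs X = M at *
    generalize fs Y = N at *
    generalize vc X = a at *
    generalize vc Y = b at *
    have hVV : ∀ K L : Matrix (Fin 3) (Fin 3) HC, (V * K * Vᴴ) * (V * L * Vᴴ) =
        V * (K * L) * Vᴴ := fun K L => by
      rw [show (V * K * Vᴴ) * (V * L * Vᴴ) = V * K * (Vᴴ * V) * (L * Vᴴ) by
        simp only [Matrix.mul_assoc], h2, Matrix.mul_one]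
      simp only [Matrix.mul_assoc]
    congr 1
    · rw [hVV, hVV, mat_mul_smul, mat_smul_mul]
      congr 1
      have hs : ∀ K L : Matrix (Fin 3) (Fin 3) HC, V * K * Vᴴ + V * L * Vᴴ =
          V * (K + L) * Vᴴ := fun K L => by rw [Matrix.mul_add, Matrix.add_mul]
      rw [hs, hs, ht, Matrix.mul_add, Matrix.mul_sub, mat_mul_smul, Matrix.mul_one,
        Matrix.add_mul, Matrix.sub_mul, mat_smul_mul, h1]
    · rw [mat_mulVec_smul]
      congr 1
      rw [mulVec_add, mulVec_sub, mulVec_sub, mat_mulVec_smul, mat_mulVec_smul]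
      simp only [mulVec_mulVec]
      rw [show V * M * Vᴴ * V = V * M by rw [Matrix.mul_assoc, h2, Matrix.mul_one],
        show V * N * Vᴴ * V = V * N by rw [Matrix.mul_assoc, h2, Matrix.mul_one]]
  · intro X hX
    conv_lhs => rw [← enc_fs_vc hX, mstar_enc, TV_enc]
    rw [TV, mstar_enc, Matrix.map_mul, Matrix.map_mul, hb, hbH]
    congr 1
    ext1 i
    rw [RingHom.map_mulVec, hb]
    rfl

/-! ### Automorphisms acting entrywise -/

/-- A `ℂ`-linear automorphism of the complex octonions that commutes with both involutions. -/
structure IsOctAut (g : Oct → Oct) : Prop where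
  add : ∀ x y, g (x + y) = g x + g y
  smul : ∀ (c : ℂ) x, g (c • x) = c • g x
  mul : ∀ x y, g (omul x y) = omul (g x) (g y)
  dia : ∀ x, g (odia x) = odia (g x)
  bar : ∀ x, g (obar x) = obar (g x)
  one : g oone = oone
  inv : ∃ h : Oct → Oct, (∀ x, h (odia x) = odia (h x)) ∧ (∀ x, h (g x) = x) ∧ ∀ x, g (h x) = x

theorem IsOctAut.comp {g h : Oct → Oct} (hg : IsOctAut g) (hh : IsOctAut h) :
    IsOctAut (fun x => g (h x)) where
  add x y := by rw [hh.add, hg.add]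
  smul c x := by rw [hh.smul, hg.smul]
  mul x y := by rw [hh.mul, hg.mul]
  dia x := by rw [hh.dia, hg.dia]
  bar x := by rw [hh.bar, hg.bar]
  one := by rw [hh.one, hg.one]
  inv := by
    obtain ⟨g', a, b, c⟩ := hg.inv
    obtain ⟨h', a', b', c'⟩ := hh.inv
    exact ⟨fun x => h' (g' x), fun x => by simp only [a, a'],
      fun x => by simp only [b, b'], fun x => by simp only [c', c]⟩

theorem IsOctAut.map_aut {g : Oct → Oct} (hg : IsOctAut g) :
    IsJordanStarAut (fun X => Matrix.map X g) := by
  obtain ⟨h, hd, hhg, hgh⟩ := hg.inv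
  have hm : ∀ f : Oct → Oct, (∀ x, f (odia x) = odia (f x)) → ∀ X ∈ H3O, Matrix.map X f ∈ H3O :=
    fun f hf X hX => by
      rw [mem_H3O] at *
      intro i j
      rw [map_apply, ← hf, hX, map_apply]
  refine aut_of_inverse (S := fun X => Matrix.map X h) (hm g hg.dia) (hm h hd)
    (fun X _ => by ext1 i j; exact hhg _) (fun X _ => by ext1 i j; exact hgh _)
    (fun X _ Y _ => by ext1 i j; exact hg.add _ _) (fun c X _ => by ext1 i j; exact hg.smul _ _)
    ?_ (fun X _ => by ext1 i j; exact hg.bar _)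
  intro X _ Y _
  ext1 i j
  change g (jord X Y i j) = _
  simp only [jord_apply, hg.smul, hg.add, hg.mul, Fin.sum_univ_three, map_apply]

/-! ### Automorphisms of the octonions -/

/-- The biquaternion with given coordinates. -/
def mkq (a b c d : ℂ) : HC := ⟨a, b, c, d⟩

@[simp] theorem mkq_re (a b c d : ℂ) : (mkq a b c d).re = a := rfl
@[simp] theorem mkq_imI (a b c d : ℂ) : (mkq a b c d).imI = b := rfl
@[simp] theorem mkq_imJ (a b c d : ℂ) : (mkq a b c d).imJ = c := rfl
@[simp] theorem mkq_imK (a b c d : ℂ) : (mkq a b c d).imK = d := rfl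

theorem HC_star_mul_self {u : HC} (h : u * star u = 1) : star u * u = 1 := by
  rw [Quaternion.star_mul_self, ← Quaternion.self_mul_star, h]

theorem real_coords {q : HC} (h : qbar q = q) : ∃ a b c d : ℝ, q = mkq a b c d := by
  have h1 := Complex.conj_eq_iff_real.mp (congrArg (fun y : HC => y.re) h)
  have h2 := Complex.conj_eq_iff_real.mp (congrArg (fun y : HC => y.imI) h)
  have h3 := Complex.conj_eq_iff_real.mp (congrArg (fun y : HC => y.imJ) h)
  have h4 := Complex.conj_eq_iff_real.mp (congrArg (fun y : HC => y.imK) h)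
  obtain ⟨a, ha⟩ := h1
  obtain ⟨b, hb⟩ := h2
  obtain ⟨c, hc⟩ := h3
  obtain ⟨d, hd⟩ := h4
  exact ⟨a, b, c, d, by ext <;> simp [*]⟩

/-- Polar decomposition of a real quaternion. -/
theorem exists_unit_mul_real {q : HC} (hq : qbar q = q) :
    ∃ (w : HC) (r : ℝ), qbar w = w ∧ w * star w = 1 ∧ w * q = (r : ℂ) • 1 ∧
      q * w = (r : ℂ) • 1 := by
  obtain ⟨a, b, c, d, rfl⟩ := real_coords hq
  by_cases h0 : a ^ 2 + b ^ 2 + c ^ 2 + d ^ 2 = 0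
  · have ha : a = 0 := by nlinarith [sq_nonneg a, sq_nonneg b, sq_nonneg c, sq_nonneg d]
    have hb : b = 0 := by nlinarith [sq_nonneg a, sq_nonneg b, sq_nonneg c, sq_nonneg d]
    have hc : c = 0 := by nlinarith [sq_nonneg a, sq_nonneg b, sq_nonneg c, sq_nonneg d]
    have hd : d = 0 := by nlinarith [sq_nonneg a, sq_nonneg b, sq_nonneg c, sq_nonneg d]
    subst ha hb hc hd
    refine ⟨1, 0, ?_, ?_, ?_, ?_⟩ <;> ext <;> simp
  · set n := √(a ^ 2 + b ^ 2 + c ^ 2 + d ^ 2) with hn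
    have hn2 : n ^ 2 = a ^ 2 + b ^ 2 + c ^ 2 + d ^ 2 := Real.sq_sqrt (by positivity)
    have hn0 : n ≠ 0 := fun h => h0 (by rw [← hn2, h]; simp)
    have hnc : (n : ℂ) ≠ 0 := by exact_mod_cast hn0
    have hn2c : (n : ℂ) ^ 2 = a ^ 2 + b ^ 2 + c ^ 2 + d ^ 2 := by exact_mod_cast hn2
    refine ⟨mkq (a / n) (-b / n) (-c / n) (-d / n), n, ?_, ?_, ?_, ?_⟩ <;> ext <;> simp <;>
      field_simp <;> (try ring_nf) <;> linear_combination -hn2c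

/-- Every real quaternion is conjugate to an element of `ℝ + ℝ i`. -/
theorem exists_unit_conj {x : HC} (hx : qbar x = x) :
    ∃ (u : HC) (α β : ℝ), qbar u = u ∧ u * star u = 1 ∧ u * x * star u = mkq α β 0 0 := by
  obtain ⟨a, b, c, d, rfl⟩ := real_coords hx
  by_cases h0 : c ^ 2 + d ^ 2 = 0
  · have hc : c = 0 := by nlinarith [sq_nonneg c, sq_nonneg d]
    have hd : d = 0 := by nlinarith [sq_nonneg c, sq_nonneg d]
    subst hc hd
    refine ⟨1, a, b, ?_, ?_, ?_⟩ <;> ext <;> simp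
  · set n := √(b ^ 2 + c ^ 2 + d ^ 2) with hn
    have hn2 : n ^ 2 = b ^ 2 + c ^ 2 + d ^ 2 := Real.sq_sqrt (by positivity)
    have h0' : 0 < c ^ 2 + d ^ 2 := lt_of_le_of_ne (by positivity) (Ne.symm h0)
    set m := √((n + b) ^ 2 + c ^ 2 + d ^ 2) with hm
    have hm2 : m ^ 2 = (n + b) ^ 2 + c ^ 2 + d ^ 2 := Real.sq_sqrt (by positivity)
    have hm0 : m ≠ 0 := fun h => by
      rw [h] at hm2
      nlinarith [sq_nonneg (n + b)]
    have hmc : (m : ℂ) ≠ 0 := by exact_mod_cast hm0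
    have hn2c : (n : ℂ) ^ 2 = b ^ 2 + c ^ 2 + d ^ 2 := by exact_mod_cast hn2
    have hm2c : (m : ℂ) ^ 2 = (n + b) ^ 2 + c ^ 2 + d ^ 2 := by exact_mod_cast hm2
    -- conjugation by the unit bisector of `i` and the imaginary part is a half-turn
    -- interchanging their directions
    refine ⟨mkq 0 ((n + b) / m) (c / m) (d / m), a, n, ?_, ?_, ?_⟩
    · ext <;> simp
    · ext <;> simp <;> field_simp <;> first | linear_combination -hm2c | ring
    · ext <;> simp <;> field_simp
      · linear_combination -a * hm2c
      · linear_combination (-n : ℂ) * hm2c + (-b - n : ℂ) * hn2c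
      · linear_combination (-c : ℂ) * hn2c
      · linear_combination (-d : ℂ) * hn2c

/-- The automorphism `(x₁, x₂) ↦ (u x₁ u⋄, u x₂ q)` attached to two unit quaternions. -/
def gso4 (u q : HC) (x : Oct) : Oct := (u * x.1 * star u, u * x.2 * q)

theorem gso4_aut {u q : HC} (hu : u * star u = 1) (hq : q * star q = 1) (hub : qbar u = u)
    (hqb : qbar q = q) : IsOctAut (gso4 u q) := by
  have hu' := HC_star_mul_self hu
  have hq' := HC_star_mul_self hq
  have cu : ∀ x, star u * (u * x) = x := fun x => by rw [← mul_assoc, hu', one_mul]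
  have cu' : ∀ x, u * (star u * x) = x := fun x => by rw [← mul_assoc, hu, one_mul]
  have cq : ∀ x, q * (star q * x) = x := fun x => by rw [← mul_assoc, hq, one_mul]
  refine ⟨?_, ?_, ?_, ?_, ?_, ?_, fun x => (star u * x.1 * u, star u * x.2 * star q), ?_, ?_, ?_⟩
  · intro x y
    simp only [gso4, Prod.fst_add, Prod.snd_add, mul_add, add_mul, Prod.mk_add_mk]
  · intro c x
    refine Prod.ext ?_ ?_
    · change u * (c • x.1) * star u = c • (u * x.1 * star u)
      rw [HC_mul_smul, HC_smul_mul]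
    · change u * (c • x.2) * q = c • (u * x.2 * q)
      rw [HC_mul_smul, HC_smul_mul]
  · intro x y
    simp only [gso4, omul, qdia_eq_star, mul_sub, sub_mul, mul_add, add_mul, star_mul, star_star,
      mul_assoc, cu, cq]
  · intro x
    simp only [gso4, odia, qdia_eq_star, star_mul, star_star, mul_assoc, HC_neg_mul, HC_mul_neg]
  · intro x
    have h : ∀ x y, qbar (x * y) = qbar x * qbar y := fun x y => map_mul qbarHom x y
    simp only [gso4, obar, h, hub, hqb, qbar_star]
  · simp only [gso4, oone, mul_one, mul_zero, zero_mul, hu]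
  · intro x
    simp only [odia, qdia_eq_star, star_mul, star_star, mul_assoc, HC_neg_mul, HC_mul_neg]
  · intro x
    simp only [gso4, mul_assoc, cu, hu', hq, mul_one]
  · intro x
    simp only [gso4, mul_assoc, cu', hu, hq', mul_one]

/-- The rotation with cosine `c` and sine `s` in the plane of `(i, 0)` and `(0, 1)` and in the plane
of `(k, 0)` and `(0, j)`. -/
def grot (c s : ℝ) (x : Oct) : Oct :=
  (mkq x.1.re (c * x.1.imI - s * x.2.re) x.1.imJ (c * x.1.imK - s * x.2.imJ),
    mkq (s * x.1.imI + c * x.2.re) x.2.imI (s * x.1.imK + c * x.2.imJ) x.2.imK)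

set_option maxHeartbeats 1000000 in
theorem grot_aut {c s : ℝ} (h : c ^ 2 + s ^ 2 = 1) : IsOctAut (grot c s) := by
  have hc : (c : ℂ) ^ 2 + (s : ℂ) ^ 2 = 1 := by exact_mod_cast h
  refine ⟨?_, ?_, ?_, ?_, ?_, ?_, grot c (-s), ?_, ?_, ?_⟩
  · intro x y
    refine Prod.ext ?_ ?_ <;> ext <;> simp [grot] <;> ring
  · intro k x
    refine Prod.ext ?_ ?_ <;> ext <;> simp [grot] <;> ring
  · intro x y
    refine Prod.ext ?_ ?_ <;> ext <;> simp [grot, omul, qdia_eq_star] <;> grind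
  · intro x
    refine Prod.ext ?_ ?_ <;> ext <;> simp [grot, odia, qdia_eq_star] <;> ring
  · intro x
    refine Prod.ext ?_ ?_ <;> ext <;> simp [grot, obar]
  · refine Prod.ext ?_ ?_ <;> ext <;> simp [grot, oone]
  · intro x
    refine Prod.ext ?_ ?_ <;> ext <;> simp [grot, odia, qdia_eq_star] <;> ring
  · intro x
    refine Prod.ext ?_ ?_ <;> ext <;> simp [grot] <;> grind
  · intro x
    refine Prod.ext ?_ ?_ <;> ext <;> simp [grot] <;> grind

/-- Every real octonion can be moved into `ℂ = ℝ + ℝ i` by an automorphism. -/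
theorem exists_octAut {x : Oct} (hx : obar x = x) :
    ∃ (g : Oct → Oct) (α β : ℝ), IsOctAut g ∧ g x = (mkq α β 0 0, 0) := by
  obtain ⟨u, a, b, hub, hu, hux⟩ := exists_unit_conj (congrArg Prod.fst hx)
  have hr : qbar (u * x.2) = u * x.2 := by
    refine (map_mul qbarHom u x.2).trans ?_
    change qbar u * qbar x.2 = _
    rw [hub, show qbar x.2 = x.2 from congrArg Prod.snd hx]
  obtain ⟨q, r, hqb, hq, -, hqr⟩ := exists_unit_mul_real hr
  have h1 := gso4_aut hu hq hub hqb
  have e1 : gso4 u q x = (mkq a b 0 0, (r : ℂ) • 1) := by rw [gso4, hux, hqr]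
  by_cases h0 : b ^ 2 + r ^ 2 = 0
  · have hr0 : r = 0 := by nlinarith [sq_nonneg b, sq_nonneg r]
    exact ⟨_, a, b, h1, by rw [e1, hr0]; refine Prod.ext rfl ?_; ext <;> simp⟩
  · set n := √(b ^ 2 + r ^ 2) with hn
    have hn2 : n ^ 2 = b ^ 2 + r ^ 2 := Real.sq_sqrt (by positivity)
    have hn0 : n ≠ 0 := fun h => h0 (by rw [← hn2, h]; simp)
    have hnc : (n : ℂ) ≠ 0 := by exact_mod_cast hn0
    have hn2c : (n : ℂ) ^ 2 = b ^ 2 + r ^ 2 := by exact_mod_cast hn2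
    have h2 : IsOctAut (grot (b / n) (-r / n)) := grot_aut (by
      field_simp
      linear_combination -hn2)
    refine ⟨_, a, n, h2.comp h1, ?_⟩
    rw [e1]
    refine Prod.ext ?_ ?_ <;> ext <;> simp [grot] <;> field_simp
    · linear_combination -hn2c
    · ring

/-! ### Automorphisms fixing the diagonal -/

/-- A Jordan `*`-automorphism that fixes every diagonal matrix of `H₃(𝕆)`. -/
def IsFixAut (T : M3O → M3O) : Prop :=
  IsJordanStarAut T ∧ ∀ D ∈ H3O, (∀ i j, i ≠ j → D i j = 0) → T D = D

theorem IsFixAut.comp {T S : M3O → M3O} (hT : IsFixAut T) (hS : IsFixAut S) :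
    IsFixAut (fun X => T (S X)) :=
  ⟨hT.1.comp hS.1, fun D hD h => by simp only [hS.2 D hD h, hT.2 D hD h]⟩

theorem diag_entry {X : M3O} (hX : X ∈ H3O) (i : Fin 3) : X i i = (X i i).1.re • oone := by
  have h := herm_diag (fs_herm hX) i
  refine Prod.ext ?_ ?_
  · exact h.trans (HC_coe _)
  · refine (neg_self_HC (congrArg Prod.snd (mem_H3O.mp hX i i))).trans ?_
    exact (smul_zero (X i i).1.re).symm

theorem IsOctAut.scalar {g : Oct → Oct} (hg : IsOctAut g) (c : ℂ) : g (c • oone) = c • oone := by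
  rw [hg.smul, hg.one]

theorem IsOctAut.zero {g : Oct → Oct} (hg : IsOctAut g) : g 0 = 0 := by
  refine (congrArg g (zero_smul ℂ (0 : Oct)).symm).trans ((hg.smul 0 0).trans ?_)
  exact zero_smul ℂ (g 0)

theorem IsOctAut.fixAut {g : Oct → Oct} (hg : IsOctAut g) :
    IsFixAut (fun X => Matrix.map X g) := by
  refine ⟨hg.map_aut, fun D hD h => ?_⟩
  ext1 i j
  change g (D i j) = D i j
  by_cases hij : i = j
  · subst hij
    rw [diag_entry hD i, hg.scalar]
  · rw [h i j hij, hg.zero]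

theorem diag_eq_enc {D : M3O} (hD : D ∈ H3O) (h : ∀ i j, i ≠ j → D i j = 0) :
    D = enc (diagonal fun i => (D i i).1.re • (1 : HC)) 0 := by
  ext1 i j
  by_cases hij : i = j
  · subst hij
    conv_lhs => rw [diag_entry hD i]
    refine Prod.ext ?_ ?_
    · simp [enc, oone]
    · fin_cases i <;> simp [enc, sk, oone]
  · rw [h i j hij]
    refine Prod.ext ?_ ?_
    · simp [enc, hij]
    · fin_cases i <;> fin_cases j <;> simp [enc, sk]

theorem diagonal_ct (u : Fin 3 → HC) : (diagonal u)ᴴ = diagonal fun i => star (u i) := by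
  exact diagonal_conjTranspose u

theorem TV_diagonal_fixAut {u : Fin 3 → HC} (hu : ∀ i, u i * star (u i) = 1)
    (hb : ∀ i, qbar (u i) = u i) : IsFixAut (TV (diagonal u)) := by
  have h1 : diagonal u * (diagonal u)ᴴ = 1 := by
    rw [diagonal_ct, diagonal_mul_diagonal, ← diagonal_one]
    exact congrArg diagonal (funext hu)
  refine ⟨TV_aut h1 ?_ ?_, fun D hD h => ?_⟩
  · rw [diagonal_ct, diagonal_mul_diagonal, ← diagonal_one]
    exact congrArg diagonal (funext fun i => HC_star_mul_self (hu i))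
  · rw [diagonal_map (map_zero _)]
    exact congrArg diagonal (funext hb)
  · have e := diag_eq_enc hD h
    rw [e, TV_enc, mulVec_zero, diagonal_ct, diagonal_mul_diagonal,
      diagonal_mul_diagonal]
    congr 2
    ext1 i
    change u i * _ * star (u i) = _
    rw [HC_mul_smul, mul_one, HC_smul_mul, hu]

theorem TV_diagonal_fst (u : Fin 3 → HC) (X : M3O) (i j : Fin 3) :
    (TV (diagonal u) X i j).1 = u i * (X i j).1 * star (u j) := by
  change (diagonal u * fs X * (diagonal u)ᴴ) i j = _
  rw [diagonal_ct, mul_diagonal, diagonal_mul]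
  rfl

theorem TV_diagonal_vc (u : Fin 3 → HC) (X : M3O) (i : Fin 3) :
    vc (TV (diagonal u) X) i = u i * vc X i := by
  rw [TV, vc_enc, mulVec_diagonal]

/-! ### Complex matrices inside `H₃(𝕆)` -/

/-- The embedding of `ℂ` as `ℝ + ℝ i` into the real quaternions. -/
def cxq : ℂ →+* HC where
  toFun z := mkq z.re z.im 0 0
  map_one' := by ext <;> simp
  map_zero' := by ext <;> simp
  map_add' x y := by ext <;> simp
  map_mul' x y := by ext <;> simp

theorem cxq_apply (z : ℂ) : cxq z = mkq z.re z.im 0 0 := rfl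

theorem cxq_star (z : ℂ) : cxq (star z) = star (cxq z) := by
  ext <;> simp [cxq_apply]

theorem cxq_bar (z : ℂ) : qbar (cxq z) = cxq z := by
  ext <;> simp [cxq_apply]

theorem cxq_ofReal (r : ℝ) : cxq r = (r : ℂ) • 1 := by
  ext <;> simp [cxq_apply]

theorem cxq_inj : Function.Injective cxq := fun x y h => by
  have h1 := congrArg (fun q : HC => q.re) h
  have h2 := congrArg (fun q : HC => q.imI) h
  simp only [cxq_apply, mkq_re, mkq_imI, Complex.ofReal_inj] at h1 h2
  exact Complex.ext h1 h2

/-- The octonion matrix given by a complex matrix. -/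
def emb (C : Matrix (Fin 3) (Fin 3) ℂ) : M3O := enc (C.map cxq) 0

theorem emb_apply (C : Matrix (Fin 3) (Fin 3) ℂ) (i j : Fin 3) : emb C i j = (cxq (C i j), 0) := by
  refine Prod.ext rfl ?_
  fin_cases i <;> fin_cases j <;> simp [emb, enc, sk]

theorem emb_inj {C D : Matrix (Fin 3) (Fin 3) ℂ} (h : emb C = emb D) : C = D := by
  ext1 i j
  have := congrArg (fun X : M3O => (X i j).1) h
  simp only [emb_apply] at this
  exact cxq_inj this

theorem emb_mem {C : Matrix (Fin 3) (Fin 3) ℂ} (hC : C.IsHermitian) : emb C ∈ H3O := by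
  refine enc_mem ?_
  ext1 i j
  change star (cxq (C j i)) = cxq (C i j)
  rw [← cxq_star]
  exact congrArg cxq (congrFun (congrFun hC i) j)

theorem jord_emb {C D : Matrix (Fin 3) (Fin 3) ℂ} :
    jord (emb C) (emb D) = emb ((2⁻¹ : ℂ) • (C * D + D * C)) := by
  ext1 i j
  have h : ∀ x y : HC, omul (x, 0) (y, 0) = (x * y, 0) := fun x y => by
    simp [omul, qdia_eq_star]
  have h2 : (2⁻¹ : ℂ) = ((2⁻¹ : ℝ) : ℂ) := by norm_num
  rw [jord_apply, emb_apply]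
  change _ = (cxq ((2⁻¹ : ℂ) * ((C * D) i j + (D * C) i j)), 0)
  rw [map_mul, h2, cxq_ofReal, HC_smul_mul, one_mul]
  simp only [emb_apply, h, Fin.sum_univ_three, Matrix.mul_apply, map_add, map_mul]
  refine Prod.ext rfl ?_
  change (_ : ℂ) • (0 + 0 + 0 + (0 + 0 + 0) : HC) = 0
  simp

theorem TV_emb (V C : Matrix (Fin 3) (Fin 3) ℂ) : TV (V.map cxq) (emb C) = emb (V * C * Vᴴ) := by
  rw [emb, TV_enc, mulVec_zero, emb, Matrix.map_mul, Matrix.map_mul]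
  congr 2
  ext1 i j
  exact (cxq_star _).symm

theorem TV_cx_aut {V : Matrix (Fin 3) (Fin 3) ℂ} (h1 : V * Vᴴ = 1) (h2 : Vᴴ * V = 1) :
    IsJordanStarAut (TV (V.map cxq)) := by
  have e : (V.map cxq)ᴴ = Vᴴ.map cxq := by
    ext1 i j
    exact (cxq_star _).symm
  have e1 : (1 : Matrix (Fin 3) (Fin 3) ℂ).map cxq = 1 := by
    ext1 i j
    simp [Matrix.one_apply, apply_ite cxq]
  refine TV_aut ?_ ?_ ?_
  · rw [e, ← Matrix.map_mul, h1, e1]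
  · rw [e, ← Matrix.map_mul, h2, e1]
  · ext1 i j
    exact cxq_bar _

/-! ### Reduction of a real element to a complex Hermitian matrix -/

/-- Two real and one complex entry above the diagonal suffice for a real element of `H₃(𝕆)` to be a
complex Hermitian matrix. -/
theorem real_eq_emb {X : M3O} (hX : X ∈ H3O) (hb : mstar X = X) {r s α β : ℝ}
    (h01 : X 0 1 = (r : ℂ) • oone) (h12 : X 1 2 = (s : ℂ) • oone)
    (h02 : X 0 2 = (mkq α β 0 0, 0)) :
    ∃ C : Matrix (Fin 3) (Fin 3) ℂ, C.IsHermitian ∧ X = emb C ∧ C 0 1 = r ∧ C 1 2 = s := by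
  have hre : ∀ i, ∃ d : ℝ, X i i = (d : ℂ) • oone := fun i => by
    have h : starRingEnd ℂ (X i i).1.re = (X i i).1.re :=
      congrArg (fun Y : M3O => (Y i i).1.re) hb
    obtain ⟨d, hd⟩ := Complex.conj_eq_iff_real.mp h
    exact ⟨d, by rw [← hd]; exact diag_entry hX i⟩
  choose d hd using hre
  have hm := mem_H3O.mp hX
  have hc : ∀ t : ℝ, (t : ℂ) • oone = (cxq t, 0) := fun t => by
    rw [cxq_ofReal]
    refine Prod.ext rfl (smul_zero _)
  have hz : (mkq α β 0 0, (0 : HC)) = (cxq ⟨α, β⟩, 0) := rfl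
  have ho : ∀ z : ℂ, odia (cxq z, 0) = (cxq (star z), 0) := fun z => by
    rw [odia, qdia_eq_star, cxq_star]
    simp
  have hs : ∀ t : ℝ, star (t : ℂ) = t := fun t => Complex.conj_ofReal t
  refine ⟨!![(d 0 : ℂ), r, ⟨α, β⟩; r, d 1, s; star ⟨α, β⟩, s, d 2], ?_, ?_, rfl, rfl⟩
  · ext1 i j
    fin_cases i <;> fin_cases j <;> simp
  · ext1 i j
    rw [emb_apply]
    fin_cases i <;> fin_cases j
    · exact (hd 0).trans (hc _)
    · exact h01.trans (hc _)
    · exact h02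
    · refine (hm 1 0).symm.trans ?_
      rw [h01, hc, ho, hs]
      rfl
    · exact (hd 1).trans (hc _)
    · exact h12.trans (hc _)
    · refine (hm 2 0).symm.trans ?_
      rw [h02, hz, ho]
      rfl
    · refine (hm 2 1).symm.trans ?_
      rw [h12, hc, ho, hs]
      rfl
    · exact (hd 2).trans (hc _)

/-- A real element of `H₃(𝕆)` can be made complex, with two real off-diagonal entries, by an
automorphism that fixes the diagonal matrices. -/
theorem exists_fixAut_emb {X : M3O} (hX : X ∈ H3O) (hb : mstar X = X) :
    ∃ T, IsFixAut T ∧ ∃ (C : Matrix (Fin 3) (Fin 3) ℂ) (r s : ℝ), C.IsHermitian ∧ T X = emb C ∧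
      C 0 1 = r ∧ C 1 2 = s := by
  have real : ∀ {T : M3O → M3O}, IsFixAut T → mstar (T X) = T X := fun h => by
    rw [← h.1.map_mstar hX, hb]
  have ent : ∀ {Y : M3O}, mstar Y = Y → ∀ i j, obar (Y i j) = Y i j :=
    fun h i j => congrFun (congrFun h i) j
  -- the entry `(0, 1)` becomes complex, and then real
  obtain ⟨g₁, α₁, β₁, hg₁, e₁⟩ := exists_octAut (ent hb 0 1)
  have f₁ := hg₁.fixAut
  have hq₁ : qbar (mkq α₁ β₁ 0 0) = mkq α₁ β₁ 0 0 := cxq_bar ⟨α₁, β₁⟩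
  obtain ⟨w₁, r, hw₁, hu₁, hr, -⟩ := exists_unit_mul_real hq₁
  have f₂ : IsFixAut (TV (diagonal ![w₁, 1, 1])) := by
    refine TV_diagonal_fixAut (fun i => ?_) (fun i => ?_) <;> fin_cases i
    · exact hu₁
    · simp
    · simp
    · exact hw₁
    · exact map_one qbarHom
    · exact map_one qbarHom
  have F₂ := f₂.comp f₁
  set X₂ := TV (diagonal ![w₁, 1, 1]) (X.map g₁) with hX₂
  have a₂ : X₂ 0 1 = (r : ℂ) • oone := by
    refine Prod.ext ?_ ?_
    · rw [hX₂, TV_diagonal_fst, map_apply, e₁]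
      simpa [oone] using hr
    · have := TV_diagonal_vc ![w₁, 1, 1] (X.map g₁) 2
      simpa [vc, e₁, oone] using this
  -- the entry `(1, 2)` becomes complex, and then real
  obtain ⟨g₃, α₃, β₃, hg₃, e₃⟩ := exists_octAut (ent (real F₂) 1 2)
  have hq₃ : qbar (mkq α₃ β₃ 0 0) = mkq α₃ β₃ 0 0 := cxq_bar ⟨α₃, β₃⟩
  obtain ⟨w₃, s, hw₃, hu₃, -, hs⟩ := exists_unit_mul_real hq₃
  have F₃ := hg₃.fixAut.comp F₂
  have f₄ : IsFixAut (TV (diagonal ![1, 1, star w₃])) := by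
    refine TV_diagonal_fixAut (fun i => ?_) (fun i => ?_) <;> fin_cases i
    · simp
    · simp
    · simpa using HC_star_mul_self hu₃
    · exact map_one qbarHom
    · exact map_one qbarHom
    · change qbar (star w₃) = star w₃
      rw [qbar_star, hw₃]
  have F₄ := f₄.comp F₃
  set X₄ := TV (diagonal ![1, 1, star w₃]) (X₂.map g₃) with hX₄
  have a₄ : X₄ 0 1 = (r : ℂ) • oone := by
    have h3 : X₂.map g₃ 0 1 = (r : ℂ) • oone := by rw [map_apply, a₂, hg₃.scalar]
    refine Prod.ext ?_ ?_
    · rw [hX₄, TV_diagonal_fst, h3]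
      simp [oone]
    · have := TV_diagonal_vc ![1, 1, star w₃] (X₂.map g₃) 2
      simp only [vc, h3] at this
      simpa [oone] using this
  have b₄ : X₄ 1 2 = (s : ℂ) • oone := by
    refine Prod.ext ?_ ?_
    · rw [hX₄, TV_diagonal_fst, map_apply, e₃]
      simpa [oone] using hs
    · have := TV_diagonal_vc ![1, 1, star w₃] (X₂.map g₃) 0
      simp only [vc, show X₂.map g₃ 1 2 = (mkq α₃ β₃ 0 0, 0) from e₃] at this
      simpa [oone] using this
  obtain ⟨g₅, α₅, β₅, hg₅, e₅⟩ := exists_octAut (ent (real F₄) 0 2)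
  have F₅ := hg₅.fixAut.comp F₄
  obtain ⟨C, hC, e, c1, c2⟩ := real_eq_emb (X := X₄.map g₅) (F₅.1.mem hX) (real F₅)
    (by rw [map_apply, a₄, hg₅.scalar]) (by rw [map_apply, b₄, hg₅.scalar]) e₅
  exact ⟨_, F₅, C, r, s, hC, e, c1, c2⟩

/-! ### Simultaneous diagonalisation of complex Hermitian matrices -/

/-- Two commuting complex Hermitian matrices are diagonalised by one unitary matrix. -/
theorem joint_diag (C D : Matrix (Fin 3) (Fin 3) ℂ) (hC : C.IsHermitian) (hD : D.IsHermitian)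
    (h : C * D = D * C) : ∃ V : Matrix (Fin 3) (Fin 3) ℂ, V * Vᴴ = 1 ∧ Vᴴ * V = 1 ∧
      (∀ i j, i ≠ j → (V * C * Vᴴ) i j = 0) ∧ (∀ i j, i ≠ j → (V * D * Vᴴ) i j = 0) := by
  classical
  have hA := isSymmetric_toEuclideanLin_iff.mpr hC
  have hB := isSymmetric_toEuclideanLin_iff.mpr hD
  have hAB : Commute (toEuclideanLin C) (toEuclideanLin D) := by
    ext x : 1
    simp [toLpLin_apply, h]
  have hI := LinearMap.IsSymmetric.directSum_isInternal_of_commute hA hB hAB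
  have hO := LinearMap.IsSymmetric.orthogonalFamily_eigenspace_inf_eigenspace hA hB
  let W : ℂ × ℂ → Submodule ℂ (EuclideanSpace ℂ (Fin 3)) := fun i =>
    Module.End.eigenspace (toEuclideanLin C) i.2 ⊓ Module.End.eigenspace (toEuclideanLin D) i.1
  let v := fun i : ℂ × ℂ => (stdOrthonormalBasis ℂ
    (W i))
  let b := hI.collectedBasis (fun i => (v i).toBasis)
  have hb : Orthonormal ℂ b := hI.collectedBasis_orthonormal hO (fun i => by simp)
  have : Fintype (Σ i : ℂ × ℂ, Fin (Module.finrank ℂ (W i))) :=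
    FiniteDimensional.fintypeBasisIndex b
  have hcard : Fintype.card (Σ i : ℂ × ℂ, Fin (Module.finrank ℂ (W i))) = Fintype.card (Fin 3) := by
    rw [← Module.finrank_eq_card_basis b]; simp
  let e := Fintype.equivOfCardEq hcard
  let B : OrthonormalBasis (Fin 3) ℂ (EuclideanSpace ℂ (Fin 3)) := (b.toOrthonormalBasis hb).reindex e
  have hBe : ∀ k, ∃ α β : ℂ, C *ᵥ (B k).ofLp = α • (B k).ofLp ∧ D *ᵥ (B k).ofLp = β • (B k).ofLp := by
    intro k
    have hm : B k ∈ Module.End.eigenspace (toEuclideanLin C) (e.symm k).1.2 ⊓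
        Module.End.eigenspace (toEuclideanLin D) (e.symm k).1.1 := by
      simp [B, b]
    refine ⟨(e.symm k).1.2, (e.symm k).1.1, ?_, ?_⟩
    · simpa [toLpLin_apply] using congrArg WithLp.ofLp (Module.End.mem_eigenspace_iff.mp hm.1)
    · simpa [toLpLin_apply] using congrArg WithLp.ofLp (Module.End.mem_eigenspace_iff.mp hm.2)
  have ho : ∀ i j, star (B i).ofLp ⬝ᵥ (B j).ofLp = if i = j then 1 else 0 := by
    intro i j
    rw [← orthonormal_iff_ite.mp B.orthonormal i j, EuclideanSpace.inner_eq_star_dotProduct,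
      dotProduct_comm]
  choose α β hα hβ using hBe
  let V : Matrix (Fin 3) (Fin 3) ℂ := Matrix.of fun i j => star ((B i).ofLp j)
  have hVV : V * Vᴴ = 1 := by
    ext i j
    have := ho i j
    simpa [V, Matrix.mul_apply, dotProduct, Matrix.one_apply] using this
  have key : ∀ (M : Matrix (Fin 3) (Fin 3) ℂ) (γ : Fin 3 → ℂ),
      (∀ k, M *ᵥ (B k).ofLp = γ k • (B k).ofLp) → ∀ i j, i ≠ j → (V * M * Vᴴ) i j = 0 := by
    intro M γ hM i j hij
    have h1 : (V * M * Vᴴ) i j = star (B i).ofLp ⬝ᵥ (M *ᵥ (B j).ofLp) := by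
      rw [Matrix.mul_assoc]
      simp [V, Matrix.mul_apply, dotProduct, mulVec]
    rw [h1, hM, dotProduct_smul, ho, if_neg hij, smul_zero]
  exact ⟨V, hVV, mul_eq_one_comm.mp hVV, key C α hα, key D β hβ⟩

/-! ### Diagonalisation of a single unitary -/

theorem oone_omul (x : Oct) : omul oone x = x := by
  refine Prod.ext ?_ ?_ <;> simp [omul, oone, qdia_eq_star]

theorem omul_oone (x : Oct) : omul x oone = x := by
  refine Prod.ext ?_ ?_ <;> simp [omul, oone, qdia_eq_star]

theorem zero_omul (x : Oct) : omul 0 x = 0 := by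
  refine Prod.ext ?_ ?_ <;> simp [omul, qdia_eq_star]

theorem omul_zero (x : Oct) : omul x 0 = 0 := by
  refine Prod.ext ?_ ?_ <;> simp [omul, qdia_eq_star]

theorem oneM_jord (X : M3O) : jord oneM X = X := by
  ext1 i j
  have h1 : ∑ k, omul (oneM i k) (X k j) = X i j := by
    rw [Finset.sum_eq_single i]
    · simp [oneM, oone_omul]
    · intro k _ hk
      simp [oneM, hk.symm, zero_omul]
    · simp
  have h2 : ∑ k, omul (X i k) (oneM k j) = X i j := by
    rw [Finset.sum_eq_single j]
    · simp [oneM, omul_oone]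
    · intro k _ hk
      simp [oneM, hk, omul_zero]
    · simp
  rw [jord_apply, h1, h2]
  generalize X i j = x
  change (2⁻¹ : ℂ) • (x + x) = x
  module

theorem oneM_mem : oneM ∈ H3O := by
  rw [mem_H3O]
  intro i j
  by_cases h : i = j
  · subst h
    simp [oneM, odia, oone, qdia_eq_star]
  · simp [oneM, h, Ne.symm h, odia_zero]

/-- The operators of Jordan multiplication by a unitary and by its adjoint commute. -/
theorem unitary_comm {E X : M3O} (hE : IsUnitaryO E) (hX : X ∈ H3O) :
    jord (jord X E) (mstar E) = jord (jord X (mstar E)) E := by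
  have h1 := hE.2 oneM oneM_mem
  rw [trip, oneM_jord, jord_comm (jord E (mstar E)), oneM_jord, jord_comm E oneM, oneM_jord,
    jord_comm (mstar E), add_sub_cancel_right] at h1
  have h2 := hE.2 X hX
  rw [trip, h1, oneM_jord, jord_comm E X] at h2
  have h3 : jord (jord X (mstar E)) E - jord (jord X E) (mstar E) = 0 := by
    rw [add_sub_assoc] at h2
    exact left_eq_add.mp h2.symm
  exact (sub_eq_zero.mp h3).symm

/-- The real part of an element of `H₃(𝕆)`. -/
def reM (E : M3O) : M3O := (2⁻¹ : ℂ) • (E + mstar E)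

/-- The imaginary part of an element of `H₃(𝕆)`. -/
def imM (E : M3O) : M3O := (-(2⁻¹ * Complex.I) : ℂ) • (E + (-1 : ℂ) • mstar E)

theorem reM_mem {E : M3O} (hE : E ∈ H3O) : reM E ∈ H3O :=
  H3O_smul _ (H3O_add hE (H3O_mstar hE))

theorem imM_mem {E : M3O} (hE : E ∈ H3O) : imM E ∈ H3O :=
  H3O_smul _ (H3O_add hE (H3O_smul _ (H3O_mstar hE)))

theorem mstar_reM (E : M3O) : mstar (reM E) = reM E := by
  rw [reM, mstar_smul, mstar_add, mstar_mstar, add_comm]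
  simp only [map_inv₀, map_ofNat]

theorem mstar_imM (E : M3O) : mstar (imM E) = imM E := by
  rw [imM, mstar_smul, mstar_add, mstar_smul, mstar_mstar]
  ext1 i j
  generalize mstar E = F
  change starRingEnd ℂ (-(2⁻¹ * Complex.I)) • (F i j + starRingEnd ℂ (-1) • E i j) =
    (-(2⁻¹ * Complex.I)) • (E i j + (-1 : ℂ) • F i j)
  generalize E i j = x
  generalize F i j = y
  simp only [map_neg, map_mul, map_inv₀, map_ofNat, Complex.conj_I, map_one]
  module

theorem re_add_im (E : M3O) : reM E + Complex.I • imM E = E := by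
  ext1 i j
  rw [reM, imM]
  generalize mstar E = F
  change (2⁻¹ : ℂ) • (E i j + F i j) +
    Complex.I • (-(2⁻¹ * Complex.I)) • (E i j + (-1 : ℂ) • F i j) = E i j
  generalize E i j = x
  generalize F i j = y
  have h : Complex.I * -(2⁻¹ * Complex.I) = 2⁻¹ := by
    linear_combination (-2⁻¹ : ℂ) * Complex.I_mul_I
  rw [smul_smul, h]
  module

theorem re_im_comm {E X : M3O} (hE : IsUnitaryO E) (hX : X ∈ H3O) :
    jord (jord X (reM E)) (imM E) = jord (jord X (imM E)) (reM E) := by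
  have h := unitary_comm hE hX
  rw [reM, imM]
  generalize mstar E = F at *
  simp only [jord_smul, smul_jord, jord_add, add_jord, h]
  ext1 i j
  generalize jord (jord X E) E = P
  generalize jord (jord X F) E = Q
  generalize jord (jord X F) F = R
  generalize -(2⁻¹ * Complex.I) = k
  change k • ((2⁻¹ : ℂ) • (P i j + Q i j) + (-1 : ℂ) • (2⁻¹ : ℂ) • (Q i j + R i j)) =
    (2⁻¹ : ℂ) • (k • (P i j + (-1 : ℂ) • Q i j) + k • (Q i j + (-1 : ℂ) • R i j))
  module

/-- Two complex Hermitian matrices whose Jordan multiplication operators commute, the first of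
them diagonal, commute. -/
theorem comm_of_jord {C D : Matrix (Fin 3) (Fin 3) ℂ} (hC : ∀ i j, i ≠ j → C i j = 0)
    (h : ∀ X ∈ H3O, jord (jord X (emb C)) (emb D) = jord (jord X (emb D)) (emb C)) :
    C * D = D * C := by
  have key : ∀ i, single i i 1 * (C * D - D * C) = (C * D - D * C) * single i i 1 := fun i => by
    have hm : emb (single i i 1) ∈ H3O := emb_mem (by
      rw [IsHermitian, conjTranspose_single, star_one])
    have e := h _ hm
    generalize single i i (1 : ℂ) = X at *
    simp only [jord_emb] at e
    have e2 := congrArg (fun M => (4 : ℂ) • M) (emb_inj e)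
    simp only [Matrix.smul_mul, Matrix.mul_smul, ← smul_add, smul_smul] at e2
    norm_num at e2
    rw [← sub_eq_zero] at e2 ⊢
    rw [← e2]
    noncomm_ring
  rw [← sub_eq_zero]
  ext i j
  by_cases hij : i = j
  · subst hij
    have hs : ∀ k, C i k * D k i = D i k * C k i := fun k => by
      by_cases hk : i = k
      · subst hk
        ring
      · rw [hC _ _ hk, hC _ _ (Ne.symm hk)]
        ring
    rw [Matrix.sub_apply, Matrix.mul_apply, Matrix.mul_apply, Finset.sum_congr rfl fun k _ => hs k,
      sub_self, Matrix.zero_apply]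
  · have := congrFun (congrFun (key i) i) j
    rw [Matrix.mul_single_apply_of_ne (hbj := Ne.symm hij)] at this
    simpa using this

/-- Spectral theorem: a unitary is diagonal up to an automorphism. -/
theorem exists_aut_diag {E : M3O} (hE : IsUnitaryO E) :
    ∃ T, IsJordanStarAut T ∧ ∀ i j, i ≠ j → T E i j = 0 := by
  have hA := reM_mem hE.1
  have hB := imM_mem hE.1
  -- the real part becomes diagonal
  obtain ⟨S₁, hS₁, C, -, -, hC, e₁, -, -⟩ := exists_fixAut_emb hA (mstar_reM E)
  obtain ⟨V, hV, hV', hVC, -⟩ := joint_diag C C hC hC rfl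
  have hT₁ := (TV_cx_aut hV hV').comp hS₁.1
  set T₁ := fun X => TV (V.map cxq) (S₁ X)
  have a₁ : T₁ (reM E) = emb (V * C * Vᴴ) := by
    change TV (V.map cxq) (S₁ (reM E)) = _
    rw [e₁, TV_emb]
  have hH : (V * C * Vᴴ).IsHermitian := isHermitian_mul_mul_conjTranspose V hC
  generalize V * C * Vᴴ = C₁ at *
  have hd : ∀ i j, i ≠ j → emb C₁ i j = 0 := fun i j hij => by
    rw [emb_apply, hVC i j hij, map_zero]
    rfl
  -- the imaginary part becomes complex
  have hb : mstar (T₁ (imM E)) = T₁ (imM E) := by rw [← hT₁.map_mstar hB, mstar_imM]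
  obtain ⟨S₂, hS₂, D, -, -, hD, e₂, -, -⟩ := exists_fixAut_emb (hT₁.mem hB) hb
  have hT₂ := hS₂.1.comp hT₁
  set T₂ := fun X => S₂ (T₁ X)
  have a₂ : T₂ (reM E) = emb C₁ := by
    change S₂ (T₁ (reM E)) = _
    rw [a₁, hS₂.2 _ (emb_mem hH) hd]
  have b₂ : T₂ (imM E) = emb D := e₂
  have hcomm : C₁ * D = D * C₁ := by
    refine comm_of_jord hVC fun X hX => ?_
    obtain ⟨Y, hY, rfl⟩ := hT₂.1.surjOn hX
    rw [← a₂, ← b₂, ← hT₂.map_jord hY hA, ← hT₂.map_jord hY hB,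
      ← hT₂.map_jord (H3O_jord hY hA) hB, ← hT₂.map_jord (H3O_jord hY hB) hA, re_im_comm hE hY]
  obtain ⟨W, hW, hW', hWC, hWD⟩ := joint_diag C₁ D hH hD hcomm
  have hT₃ := (TV_cx_aut hW hW').comp hT₂
  refine ⟨_, hT₃, fun i j hij => ?_⟩
  have e : TV (W.map cxq) (T₂ E) =
      emb (W * C₁ * Wᴴ) + Complex.I • emb (W * D * Wᴴ) := by
    rw [← TV_emb, ← TV_emb, ← a₂, ← b₂]
    have h1 := hT₃.smul Complex.I hB
    have h2 := hT₃.add hA (H3O_smul Complex.I hB)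
    rw [← h1, ← h2, re_add_im]
  rw [e]
  change emb _ i j + Complex.I • emb _ i j = 0
  rw [emb_apply, emb_apply, hWC i j hij, hWD i j hij, map_zero]
  refine Prod.ext ?_ ?_ <;> simp

/-! ### The diagonal minimal projections -/

/-- The projection onto the `i`-th coordinate. -/
def eP (i : Fin 3) : M3O := emb (single i i 1)

theorem eP_mem (i : Fin 3) : eP i ∈ H3O :=
  emb_mem (by rw [IsHermitian, conjTranspose_single, star_one])

theorem mstar_emb (C : Matrix (Fin 3) (Fin 3) ℂ) : mstar (emb C) = emb C := by
  ext1 i j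
  change obar (emb C i j) = _
  rw [emb_apply, obar, cxq_bar]
  exact Prod.ext rfl (map_zero qbarHom)

theorem eP_self (i : Fin 3) : eP i i i = oone := by
  rw [eP, emb_apply, single_apply_same, map_one]
  rfl

theorem eP_of_ne {i j k : Fin 3} (h : ¬(j = i ∧ k = i)) : eP i j k = 0 := by
  rw [eP, emb_apply, single_apply_of_ne (h := fun h' => h ⟨h'.1.symm, h'.2.symm⟩), map_zero]
  rfl

theorem jord_eP (i : Fin 3) (Y : M3O) (k l : Fin 3) :
    jord (eP i) Y k l =
      (2⁻¹ : ℂ) • ((if k = i then Y i l else 0) + (if l = i then Y k i else 0)) := by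
  rw [jord_apply]
  congr 2
  · rw [Finset.sum_eq_single i]
    · split_ifs with h
      · rw [h, eP_self, oone_omul]
      · rw [eP_of_ne fun h' => h h'.1, zero_omul]
    · intro m _ hm
      rw [eP_of_ne fun h' => hm h'.2, zero_omul]
    · simp
  · rw [Finset.sum_eq_single i]
    · split_ifs with h
      · rw [h, eP_self, omul_oone]
      · rw [eP_of_ne fun h' => h h'.2, omul_zero]
    · intro m _ hm
      rw [eP_of_ne fun h' => hm h'.1, omul_zero]
    · simp

theorem half_add_self (x : Oct) : (2⁻¹ : ℂ) • (x + x) = x := by module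

theorem eP_idem (i : Fin 3) : jord (eP i) (eP i) = eP i := by
  ext1 k l
  rw [jord_eP]
  by_cases hk : k = i <;> by_cases hl : l = i
  · subst hk
    subst hl
    simp only [if_true]
    exact half_add_self _
  all_goals
    have h1 : (if k = i then eP i i l else 0) = 0 := by
      split_ifs <;> first | rfl | exact eP_of_ne (by tauto)
    have h2 : (if l = i then eP i k i else 0) = 0 := by
      split_ifs <;> first | rfl | exact eP_of_ne (by tauto)
    rw [h1, h2, eP_of_ne (by tauto)]
    simp

theorem eP_orth {i j : Fin 3} (h : i ≠ j) : jord (eP i) (eP j) = 0 := by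
  ext1 k l
  rw [jord_eP, eP_of_ne fun h' => h h'.1, eP_of_ne fun h' => h h'.2]
  simp

theorem eP_minProj (i : Fin 3) : IsMinProjO (eP i) := by
  refine ⟨⟨eP_mem i, mstar_emb _, eP_idem i⟩, fun h => ?_, fun X hX => ?_⟩
  · have h1 := congrArg (fun Y : M3O => (Y i i).1.re) h
    simp only [eP_self] at h1
    exact one_ne_zero (α := ℂ) h1
  · have hY := diag_entry (H3O_mstar hX) i
    set Y := mstar X
    refine ⟨(Y i i).1.re, ?_⟩
    rw [trip, eP_idem, jord_comm _ (eP i)]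
    ext1 k l
    change jord (eP i) (jord (eP i) Y) k l + jord (eP i) (jord (eP i) Y) k l - jord (eP i) Y k l =
      (Y i i).1.re • eP i k l
    by_cases hk : k = i <;> by_cases hl : l = i
    · subst hk
      subst hl
      rw [eP_self, ← hY]
      simp only [jord_eP, if_true]
      rw [half_add_self, half_add_self]
      abel
    all_goals
      rw [eP_of_ne (by tauto), jord_eP, jord_eP, jord_eP, jord_eP]
      simp only [hk, hl, if_true, if_false, add_zero, zero_add]
      generalize Y i l = y
      generalize Y k i = z
      module

theorem diag_eq_sum {D : M3O} (hD : D ∈ H3O) (h : ∀ i j, i ≠ j → D i j = 0) :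
    D = (D 0 0).1.re • eP 0 + (D 1 1).1.re • eP 1 + (D 2 2).1.re • eP 2 := by
  ext1 i j
  change _ = (D 0 0).1.re • eP 0 i j + (D 1 1).1.re • eP 1 i j + (D 2 2).1.re • eP 2 i j
  by_cases hij : i = j
  · subst hij
    have := diag_entry hD i
    fin_cases i
    · rw [eP_of_ne (i := 1) (by decide), eP_of_ne (i := 2) (by decide)]
      change _ = (D 0 0).1.re • eP 0 0 0 + _ + _
      rw [eP_self, smul_zero, smul_zero, add_zero, add_zero]
      exact this
    · rw [eP_of_ne (i := 0) (by decide), eP_of_ne (i := 2) (by decide)]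
      change _ = _ + (D 1 1).1.re • eP 1 1 1 + _
      rw [eP_self, smul_zero, smul_zero, add_zero, zero_add]
      exact this
    · rw [eP_of_ne (i := 0) (by decide), eP_of_ne (i := 1) (by decide)]
      change _ = _ + _ + (D 2 2).1.re • eP 2 2 2
      rw [eP_self, smul_zero, smul_zero, add_zero, zero_add]
      exact this
  · rw [h i j hij, eP_of_ne fun h' => hij (h'.1.trans h'.2.symm),
      eP_of_ne fun h' => hij (h'.1.trans h'.2.symm), eP_of_ne fun h' => hij (h'.1.trans h'.2.symm)]
    simp

theorem oneM_eq_sum : oneM = eP 0 + eP 1 + eP 2 := by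
  have h := diag_eq_sum oneM_mem fun i j hij => by simp [oneM, hij]
  have h1 : ∀ i, (oneM i i).1.re = 1 := fun i => by simp [oneM, oone]
  have h2 : ∀ X : M3O, (1 : ℂ) • X = X := fun X => by
    ext1 i j
    exact one_smul ℂ (X i j)
  rwa [h1, h1, h1, h2, h2, h2] at h

theorem IsJordanStarAut.map_oneM {T : M3O → M3O} (hT : IsJordanStarAut T) : T oneM = oneM := by
  obtain ⟨Y, hY, h⟩ := hT.1.surjOn oneM_mem
  have h1 := hT.map_jord hY oneM_mem
  rwa [jord_comm, oneM_jord, h, oneM_jord, eq_comm] at h1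

/-! ### Minimal projections with complex entries -/

/-- For a complex minimal projection `C`, minimality tested against the diagonal projections says
that the product of the `k`-th column and the `k`-th row of `C` is a real multiple of `C`. -/
theorem minProj_emb {C : Matrix (Fin 3) (Fin 3) ℂ} (h : IsMinProjO (emb C)) :
    C * C = C ∧ C ≠ 0 ∧ ∀ k, ∃ c : ℝ, ∀ i j, C i k * C k j = c * C i j := by
  obtain ⟨⟨hm, -, hi⟩, h0, hc⟩ := h
  refine ⟨?_, ?_, fun k => ?_⟩
  · rw [jord_emb] at hi
    have h2 := emb_inj hi
    rw [← two_smul ℂ, smul_smul] at h2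
    norm_num at h2
    exact h2
  · rintro rfl
    refine h0 ?_
    ext1 i j
    rw [emb_apply, Matrix.zero_apply, map_zero]
    rfl
  · obtain ⟨c, e⟩ := hc (eP k) (eP_mem k)
    refine ⟨c.re, fun i j => ?_⟩
    have e1 : trip (emb C) (eP k) (emb C) = emb (C * single k k 1 * C) := by
      have key : ∀ Y : Matrix (Fin 3) (Fin 3) ℂ,
          (2⁻¹ : ℂ) • ((2⁻¹ : ℂ) • (C * Y + Y * C) * C + C * (2⁻¹ : ℂ) • (C * Y + Y * C)) +
          (2⁻¹ : ℂ) • ((2⁻¹ : ℂ) • (C * Y + Y * C) * C + C * (2⁻¹ : ℂ) • (C * Y + Y * C)) -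
          (2⁻¹ : ℂ) • ((2⁻¹ : ℂ) • (C * C + C * C) * Y + Y * (2⁻¹ : ℂ) • (C * C + C * C)) =
          C * Y * C := fun Y => by
        simp only [Matrix.smul_mul, Matrix.mul_smul, smul_add, Matrix.mul_add,
          Matrix.add_mul, Matrix.mul_assoc]
        module
      rw [trip, eP, mstar_emb, jord_emb, jord_emb, jord_emb, jord_emb]
      ext1 i j
      refine Prod.ext ?_ ?_
      · change cxq _ + cxq _ - cxq _ = cxq _
        rw [← map_add, ← map_sub]
        exact congrArg cxq (congrFun (congrFun (key _) i) j)
      · rw [emb_apply]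
        change (emb _ i j).2 + (emb _ i j).2 - (emb _ i j).2 = 0
        rw [emb_apply, emb_apply]
        simp
    rw [e1] at e
    have e2 : cxq ((C * single k k (1 : ℂ) * C : Matrix (Fin 3) (Fin 3) ℂ) i j) = c • cxq (C i j) :=
      congrArg (fun Y : M3O => (Y i j).1) e
    have e3 : (C * single k k (1 : ℂ) * C : Matrix (Fin 3) (Fin 3) ℂ) i j = C i k * C k j := by
      rw [Matrix.mul_apply, Finset.sum_eq_single k]
      · simp
      · intro b _ hb
        rw [mul_single_apply_of_ne (hbj := hb), zero_mul]
      · simp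
    rw [e3] at e2
    have r1 := congrArg (fun q : HC => q.re.re) e2
    have r2 := congrArg (fun q : HC => q.imI.re) e2
    simp [cxq_apply] at r1 r2
    apply Complex.ext
    · simp [r1]
    · simp [r2]

/-- A minimal projection can be made a real symmetric matrix by an automorphism that fixes the
diagonal matrices. -/
theorem exists_fixAut_real {P : M3O} (hP : IsMinProjO P) :
    ∃ T, IsFixAut T ∧ ∃ R : Matrix (Fin 3) (Fin 3) ℝ, (∀ i j, R i j = R j i) ∧
      T P = emb (R.map Complex.ofReal) := by
  obtain ⟨T, hT, C, r, s, hC, e, h01, h12⟩ := exists_fixAut_emb hP.1.1 hP.1.2.1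
  have hmin := hT.1.map_minProj hP
  rw [e] at hmin
  obtain ⟨-, -, hc⟩ := minProj_emb hmin
  have fin : ∀ {D : Matrix (Fin 3) (Fin 3) ℂ}, D.IsHermitian → ∀ r s t : ℝ, D 0 1 = r → D 1 2 = s →
      D 0 2 = t → ∃ R : Matrix (Fin 3) (Fin 3) ℝ, (∀ i j, R i j = R j i) ∧
        D = R.map Complex.ofReal := by
    intro D hD r s t h01 h12 h02
    have hH : ∀ i j, star (D i j) = D j i := fun i j => congrFun (congrFun hD j) i
    refine ⟨D.map Complex.re, fun i j => ?_, ?_⟩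
    · rw [map_apply, map_apply, ← hH i j]
      simp
    · have ofr : ∀ {z : ℂ}, (∃ x : ℝ, z = x) → z = (z.re : ℂ) := by
        rintro z ⟨x, rfl⟩
        simp
      have dia : ∀ i, ∃ x : ℝ, D i i = x := fun i =>
        Complex.conj_eq_iff_real.mp (hH i i)
      have swap : ∀ {i j : Fin 3} {x : ℝ}, D i j = x → ∃ y : ℝ, D j i = y := fun {i j x} h =>
        ⟨x, by rw [← hH i j, h]; exact Complex.conj_ofReal x⟩
      ext1 i j
      refine ofr ?_
      fin_cases i <;> fin_cases j
      · exact dia 0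
      · exact ⟨r, h01⟩
      · exact ⟨t, h02⟩
      · exact swap h01
      · exact dia 1
      · exact ⟨s, h12⟩
      · exact swap h02
      · exact swap h12
      · exact dia 2
  have hH : ∀ i j, star (C i j) = C j i := fun i j => congrFun (congrFun hC j) i
  obtain ⟨c, hc⟩ := hc 1
  by_cases h0 : c = 0
  · have hr : r = 0 := by
      have := hc 0 0
      rw [← hH 0 1, h01, h0] at this
      simpa using this
    have hs : s = 0 := by
      have := hc 2 2
      rw [← hH 1 2, h12, h0] at this
      simpa using this
    obtain ⟨w, t, hwb, hw, hwt, -⟩ := exists_unit_mul_real (cxq_bar (C 0 2))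
    have f : IsFixAut (TV (diagonal ![w, 1, 1])) := by
      refine TV_diagonal_fixAut (fun i => ?_) (fun i => ?_) <;> fin_cases i
      · exact hw
      · simp
      · simp
      · exact hwb
      · exact map_one qbarHom
      · exact map_one qbarHom
    have F := f.comp hT
    have hmem := F.1.mem hP.1.1
    have hbar := F.1.map_mstar hP.1.1
    rw [hP.1.2.1, e] at hbar
    rw [e] at hmem
    have hv : TV (diagonal ![w, 1, 1]) (emb C) =
        enc (fs (TV (diagonal ![w, 1, 1]) (emb C))) 0 := by
      rw [fs]
      conv_lhs => rw [emb, TV_enc, mulVec_zero]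
      rfl
    have hz : ∀ i j, (TV (diagonal ![w, 1, 1]) (emb C) i j).2 = 0 := fun i j => by
      rw [hv]
      fin_cases i <;> fin_cases j <;> simp [enc, sk]
    have hf := TV_diagonal_fst ![w, 1, 1] (emb C)
    simp only [emb_apply] at hf
    obtain ⟨D, hD, e', d1, d2⟩ := real_eq_emb (r := 0) (s := 0) (α := t) (β := 0) hmem hbar.symm
      (Prod.ext (by rw [hf, h01, hr]; ext <;> simp [oone]) (by rw [hz]; simp [oone]))
      (Prod.ext (by rw [hf, h12, hs]; ext <;> simp [oone]) (by rw [hz]; simp [oone]))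
      (Prod.ext (by
        rw [hf]
        simp only [cons_val_zero, cons_val, star_one, mul_one, hwt]
        ext <;> simp) (hz _ _))
    have d3 : D 0 2 = t := by
      have h1 : (TV (diagonal ![w, 1, 1]) (emb C) 0 2).1 = (emb D 0 2).1 := by rw [e']
      rw [hf, emb_apply] at h1
      simp only [cons_val_zero, cons_val, star_one, mul_one, hwt] at h1
      rw [← cxq_ofReal] at h1
      exact (cxq_inj h1).symm
    obtain ⟨R, hR, hDR⟩ := fin hD 0 0 t d1 d2 d3
    exact ⟨_, F, R, hR, by rw [e, e', hDR]⟩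
  · have h02 : C 0 2 = ((r * s / c : ℝ) : ℂ) := by
      have := hc 0 2
      rw [h01, h12] at this
      have hcc : (c : ℂ) ≠ 0 := by exact_mod_cast h0
      push_cast
      rw [this]
      field_simp
    obtain ⟨R, hR, hDR⟩ := fin hC r s _ h01 h12 h02
    exact ⟨T, hT, R, hR, by rw [e, hDR]⟩

/-! ### Projections orthogonal to a real minimal projection -/

/-- A real symmetric minimal projection is a rank-one matrix of trace one. -/
theorem real_minProj {R : Matrix (Fin 3) (Fin 3) ℝ} (hs : ∀ i j, R i j = R j i)
    (h : IsMinProjO (emb (R.map Complex.ofReal))) :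
    R 0 0 + R 1 1 + R 2 2 = 1 ∧ ∃ k, R k k ≠ 0 ∧ ∀ i j, R i k * R k j = R k k * R i j := by
  obtain ⟨hid, h0, hc⟩ := minProj_emb h
  have hid' : ∀ i j, R i 0 * R 0 j + R i 1 * R 1 j + R i 2 * R 2 j = R i j := fun i j => by
    have := congrFun (congrFun hid i) j
    simp only [Matrix.mul_apply, Fin.sum_univ_three, map_apply] at this
    exact_mod_cast this
  have hk : ∃ k, R k k ≠ 0 := by
    by_contra! hk
    refine h0 ?_
    ext1 i j
    have := hid' i i
    rw [hk i, hs 0 i, hs 1 i, hs 2 i] at this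
    have a0 : R i 0 = 0 := by nlinarith [sq_nonneg (R i 0), sq_nonneg (R i 1), sq_nonneg (R i 2)]
    have a1 : R i 1 = 0 := by nlinarith [sq_nonneg (R i 0), sq_nonneg (R i 1), sq_nonneg (R i 2)]
    have a2 : R i 2 = 0 := by nlinarith [sq_nonneg (R i 0), sq_nonneg (R i 1), sq_nonneg (R i 2)]
    rw [map_apply, Matrix.zero_apply, Complex.ofReal_eq_zero]
    fin_cases j
    · exact a0
    · exact a1
    · exact a2
  obtain ⟨k, hk⟩ := hk
  obtain ⟨c, hc⟩ := hc k
  have hc' : ∀ i j, R i k * R k j = c * R i j := fun i j => by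
    have := hc i j
    simp only [map_apply] at this
    exact_mod_cast this
  have hck : c = R k k := mul_right_cancel₀ hk (hc' k k).symm
  rw [hck] at hc'
  refine ⟨mul_left_cancel₀ hk ?_, k, hk, hc'⟩
  have := hid' k k
  linear_combination this - hc' 0 0 - hc' 1 1 - hc' 2 2

theorem HC_smul_cancel {c : ℂ} (hc : c ≠ 0) {x : HC} (h : c • x = 0) : x = 0 := by
  have e : ∀ z : ℂ, c * z = 0 → z = 0 := fun z hz => (mul_eq_zero.mp hz).resolve_left hc
  ext
  · exact e _ (congrArg (fun y : HC => y.re) h)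
  · exact e _ (congrArg (fun y : HC => y.imI) h)
  · exact e _ (congrArg (fun y : HC => y.imJ) h)
  · exact e _ (congrArg (fun y : HC => y.imK) h)

theorem HC_lin {p q a₀ a₁ a₂ c₀ c₁ c₂ : ℂ} {x y z : HC} (h₀ : p * a₀ = q * c₀)
    (h₁ : p * a₁ = q * c₁) (h₂ : p * a₂ = q * c₂) :
    p • (a₀ • x + a₁ • y + a₂ • z) = q • (c₀ • x + c₁ • y + c₂ • z) := by
  ext
  · simp
    linear_combination h₀ * x.re + h₁ * y.re + h₂ * z.re
  · simp
    linear_combination h₀ * x.imI + h₁ * y.imI + h₂ * z.imI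
  · simp
    linear_combination h₀ * x.imJ + h₁ * y.imJ + h₂ * z.imJ
  · simp
    linear_combination h₀ * x.imK + h₁ * y.imK + h₂ * z.imK

/-- The second components of an element orthogonal to a real minimal projection `R` form a vector
in the range of `R`, so they are all multiples of one of them. -/
theorem vc_of_orth {R : Matrix (Fin 3) (Fin 3) ℝ} {k : Fin 3} (hs : ∀ i j, R i j = R j i)
    (ht : R 0 0 + R 1 1 + R 2 2 = 1) (hR : ∀ i j, R i k * R k j = R k k * R i j)
    {Q : M3O} (hQ : Q ∈ H3O) (h : jord (emb (R.map Complex.ofReal)) Q = 0) (i : Fin 3) :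
    (R k k : ℂ) • vc Q i = (R i k : ℂ) • vc Q k := by
  have hh : (R.map Complex.ofReal).IsHermitian := by
    ext1 i j
    change star (R j i : ℂ) = R i j
    rw [hs i j]
    exact Complex.conj_ofReal _
  have hM : ((R.map Complex.ofReal).map cxq)ᴴ = (R.map Complex.ofReal).map cxq :=
    fs_herm (emb_mem hh)
  rw [← enc_fs_vc hQ, emb, jord_enc hM (fs_herm hQ)] at h
  have h1 := congrArg vc h
  rw [vc_enc, mulVec_zero] at h1
  have htau : tau ((R.map Complex.ofReal).map cxq) = 1 := by
    have h : (R 0 0 : ℂ) + R 1 1 + R 2 2 = 1 := by exact_mod_cast ht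
    rw [← h]
    simp only [tau, Fin.sum_univ_three, map_apply]
    rfl
  rw [htau] at h1
  generalize vc Q = b at *
  have hb : ∀ i, b i = (R i 0 : ℂ) • b 0 + (R i 1 : ℂ) • b 1 + (R i 2 : ℂ) • b 2 := fun i => by
    have h2 : (2⁻¹ : ℂ) • ((1 : ℂ) • b i - (((R.map Complex.ofReal).map cxq) *ᵥ b) i +
        (tau (fs Q) • (0 : HC) - 0)) = 0 := by
      refine (congrFun h1 i).trans ?_
      fin_cases i <;> rfl
    have h3 : (((R.map Complex.ofReal).map cxq) *ᵥ b) i =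
        (R i 0 : ℂ) • b 0 + (R i 1 : ℂ) • b 1 + (R i 2 : ℂ) • b 2 := by
      simp only [mulVec, dotProduct, Fin.sum_univ_three, map_apply, cxq_ofReal, HC_smul_mul,
        one_mul]
    rw [← h3]
    have h4 := HC_smul_cancel (by norm_num) h2
    have h5 : tau (fs Q) • (0 : HC) = 0 := smul_zero _
    have h6 : (1 : ℂ) • b i = b i := one_smul _ _
    rw [h5, h6, sub_zero, add_zero] at h4
    exact sub_eq_zero.mp h4
  have hc : ∀ j, (R k k : ℂ) * R i j = R i k * R k j := fun j => by
    exact_mod_cast (hR i j).symm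
  rw [hb i, hb k]
  exact HC_lin (hc 0) (hc 1) (hc 2)

/-! ### Simultaneous reduction of two unitaries -/

theorem snd_eq_zero {X : M3O} (hX : X ∈ H3O) (h : ∀ i, vc X i = 0) (i j : Fin 3) :
    (X i j).2 = 0 := by
  rw [← enc_fs_vc hX]
  change sk (vc X) i j = 0
  fin_cases i <;> fin_cases j <;> simp [sk, h]

theorem snd_comb (c : Fin 3 → ℂ) {X Y Z : M3O} {i j : Fin 3} (hX : (X i j).2 = 0)
    (hY : (Y i j).2 = 0) (hZ : (Z i j).2 = 0) : ((c 0 • X + c 1 • Y + c 2 • Z) i j).2 = 0 := by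
  change c 0 • (X i j).2 + c 1 • (Y i j).2 + c 2 • (Z i j).2 = 0
  rw [hX, hY, hZ]
  ext <;> simp

theorem IsJordanStarAut.map_zero {T : M3O → M3O} (hT : IsJordanStarAut T) : T 0 = 0 := by
  have h0 : (0 : M3O) ∈ H3O := mem_H3O.mpr fun _ _ => odia_zero
  have h := hT.add h0 h0
  rw [add_zero] at h
  exact left_eq_add.mp h

/-- A minimal projection and a real element orthogonal to it can be moved simultaneously into
`H₃(ℍ_ℂ)` without changing the diagonal matrices. The minimal projection is first made real; an
automorphism of `𝕆_ℝ` does not change it any more, and can be chosen to remove the second component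
of one entry of `Q`, which by orthogonality removes all of them. -/
theorem exists_fixAut_biquat {P Q : M3O} (hP : IsMinProjO P) (hQ : Q ∈ H3O) (hb : mstar Q = Q)
    (h : jord P Q = 0) :
    ∃ F, IsFixAut F ∧ (∀ i j, (F P i j).2 = 0) ∧ ∀ i j, (F Q i j).2 = 0 := by
  obtain ⟨T, hT, R, hs, e⟩ := exists_fixAut_real hP
  obtain ⟨ht, k, hk, hR⟩ := real_minProj hs (e ▸ hT.1.map_minProj hP)
  have hTb : ∀ i j, obar (T Q i j) = T Q i j := fun i j => by
    have := hT.1.map_mstar hQ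
    rw [hb] at this
    exact (congrFun (congrFun this i) j).symm
  obtain ⟨a, b, hab⟩ : ∃ a b, ∀ X : M3O, vc X k = (X a b).2 := by
    fin_cases k
    · exact ⟨1, 2, fun _ => rfl⟩
    · exact ⟨2, 0, fun _ => rfl⟩
    · exact ⟨0, 1, fun _ => rfl⟩
  obtain ⟨g, α, β, hg, hgx⟩ := exists_octAut (hTb a b)
  have hF : IsFixAut fun X => (T X).map g := hg.fixAut.comp hT
  have hFP : (T P).map g = emb (R.map Complex.ofReal) := by
    rw [e]
    ext1 i j
    have : emb (R.map Complex.ofReal) i j = (R i j : ℂ) • oone := by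
      rw [emb_apply, map_apply, cxq_ofReal]
      exact Prod.ext rfl (by ext <;> simp [oone])
    rw [map_apply, this, hg.scalar]
  refine ⟨_, hF, fun i j => ?_, ?_⟩
  · simp only [hFP, emb_apply]
  · have hQ' := hF.1.mem hQ
    refine snd_eq_zero hQ' fun i => ?_
    have horth := hF.1.map_jord hP.1.1 hQ
    rw [h, hF.1.map_zero] at horth
    simp only [hFP] at horth
    have h1 := vc_of_orth hs ht hR hQ' horth.symm i
    have h2 : vc ((T Q).map g) k = 0 := by
      rw [hab, map_apply, hgx]
    refine HC_smul_cancel (Complex.ofReal_ne_zero.mpr hk) (h1.trans ?_)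
    rw [h2]
    exact smul_zero (R i k : ℂ)

/-- Let `U, E ∈ C₆` be unitary elements. Then there is a Jordan
`*`-automorphism `T` of `C₆` such that `T(E)` is a diagonal matrix and every entry of
`T(U)` lies in `ℍ_ℂ × {0} ⊆ 𝕆` (i.e. the entries of `T(U)` are biquaternions). -/
theorem statement18 (U E : M3O) (hU : IsUnitaryO U) (hE : IsUnitaryO E) :
    ∃ T : M3O → M3O, IsJordanStarAut T ∧
      (∀ i j, i ≠ j → T E i j = 0) ∧
      (∀ i j, (T U i j).2 = 0) := by
  obtain ⟨A, hA, hAE⟩ := exists_aut_diag hE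
  have hAU := hA.map_unitary hU
  obtain ⟨B, hB, hBU⟩ := exists_aut_diag hAU
  obtain ⟨S, hS, hSB, -⟩ := hB.exists_inverse
  -- the spectral decomposition of `A U`, with spectral projections `S (eP i)`
  have hP := fun i => hS.map_minProj (eP_minProj i)
  have hsum : ∀ (c : Fin 3 → ℂ) {T : M3O → M3O}, IsJordanStarAut T →
      T (c 0 • eP 0 + c 1 • eP 1 + c 2 • eP 2) =
        c 0 • T (eP 0) + c 1 • T (eP 1) + c 2 • T (eP 2) := fun c T hT => by
    have hm := fun i => H3O_smul (c i) (eP_mem i)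
    rw [hT.add (H3O_add (hm 0) (hm 1)) (hm 2), hT.add (hm 0) (hm 1), hT.smul _ (eP_mem 0),
      hT.smul _ (eP_mem 1), hT.smul _ (eP_mem 2)]
  have horth : jord (S (eP 0)) (S (eP 1)) = 0 := by
    rw [← hS.map_jord (eP_mem 0) (eP_mem 1), eP_orth (by decide), hS.map_zero]
  obtain ⟨F, hF, hF0, hF1⟩ := exists_fixAut_biquat (hP 0) (hP 1).1.1 (hP 1).1.2.1 horth
  have hFS := hF.1.comp hS
  -- the third projection is the complement of the other two
  have hF2 : ∀ i j, (F (S (eP 2)) i j).2 = 0 := fun i j => by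
    have h1 := hFS.map_oneM
    rw [oneM_eq_sum, hFS.add (H3O_add (eP_mem 0) (eP_mem 1)) (eP_mem 2),
      hFS.add (eP_mem 0) (eP_mem 1), ← oneM_eq_sum] at h1
    have h2 := congrArg (fun X : M3O => (X i j).2) h1
    change (F (S (eP 0)) i j).2 + (F (S (eP 1)) i j).2 + (F (S (eP 2)) i j).2 =
      (oneM i j).2 at h2
    have h3 : (oneM i j).2 = 0 := by
      rw [oneM, of_apply]
      split_ifs <;> rfl
    rwa [hF0, hF1, h3, zero_add, zero_add] at h2
  refine ⟨fun X => F (A X), hF.1.comp hA, fun i j hij => ?_, fun i j => ?_⟩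
  · simp only [hF.2 _ (hA.mem hE.1) hAE]
    exact hAE i j hij
  · obtain ⟨c, hc⟩ : ∃ c : Fin 3 → ℂ, B (A U) = c 0 • eP 0 + c 1 • eP 1 + c 2 • eP 2 :=
      ⟨fun i => (B (A U) i i).1.re, diag_eq_sum (hB.mem hAU.1) hBU⟩
    have h1 := hsum c hFS
    rw [← hc, hSB _ hAU.1] at h1
    change (F (A U) i j).2 = 0
    rw [h1]
    exact snd_comb c (hF0 i j) (hF1 i j) (hF2 i j)
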